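/- For every real number q with 0 < q < 1, ∫_0^q ∏_{j=1}^∞ (1−t^{2j})^8 (1−t^{3j})^6 / (1−t^j)^{10} dt = q ∏_{j=1}^∞ (1−q^{2j})(1−q^{6j})^5 / ((1−q^j)^5 (1−q^{3j})). Moreover this common value equals √2/12 when q = e^{−2π/√6}, equals (√3 − 1)/24 when q = e^{−2π/√3}, and equals (√6 − 2)/36 when q = e^{−2π/√2}. -/

import Mathlib

open Real

/-- The integrand `∏_{j=1}^∞ (1−t^{2j})^8 (1−t^{3j})^6 / (1−t^j)^{10}`. -/
noncomputable def U1 (t : ℝ) : ℝ :=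
  ∏' j : ℕ, (1 - t ^ (2 * (j + 1))) ^ 8 * (1 - t ^ (3 * (j + 1))) ^ 6 / (1 - t ^ (j + 1)) ^ 10

/-- The antiderivative `q ∏_{j=1}^∞ (1−q^{2j})(1−q^{6j})^5 / ((1−q^j)^5 (1−q^{3j}))`. -/
noncomputable def V1 (q : ℝ) : ℝ :=
  q * ∏' j : ℕ, (1 - q ^ (2 * (j + 1))) * (1 - q ^ (6 * (j + 1))) ^ 5 /
    ((1 - q ^ (j + 1)) ^ 5 * (1 - q ^ (3 * (j + 1))))

open Filter Topology

/-!
Write `E_k = ∏ (1 - q ^ (k j))`. The logarithmic derivative of `V1` is a combination of the Lambert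
series `∑ σ₁(n) q ^ (k n)`, `k ∣ 6`, and has to be recognised as `E₂⁷ E₃⁷ / (E₁⁵ E₆⁵)`. The
three-term relation for theta functions, in the limit where two of its four arguments coincide,
evaluates two combinations of these series as Euler product quotients. Adding them gives the claim
once `1 + 8 V = E₂⁴ E₃⁸ / (E₁⁸ E₆⁴)` and `1 + 9 V = E₂⁹ E₃³ / (E₁⁹ E₆³)` are known: the first is
again an instance of the three-term relation, and the Fricke involution `τ ↦ -1 / (6τ)`, under
which `V ↦ 1 / (72 V)`, turns it into the second.

At each of the three special points the Fricke involution sends the nome `q` of a suitable point to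
`q`, `q ^ 2` or `q ^ 3`. Combined with the modular equation between `V(q)` and `V(q ^ k)`, the
relation `V(q) V(q ^ k) = 1 / 72` becomes a polynomial equation with a single admissible root.
-/

/-! ### Infinite products -/

/-- The infinite `q`-Pochhammer symbol `(x; p)_∞`. -/
noncomputable def qPochhammer {𝕜 : Type*} [NormedField 𝕜] (x p : 𝕜) : 𝕜 :=
  ∏' k : ℕ, (1 - x * p ^ k)

/-- Euler's product `(q; q)_∞`. -/
noncomputable def eulerProd {𝕜 : Type*} [NormedField 𝕜] (q : 𝕜) : 𝕜 :=
  ∏' k : ℕ, (1 - q ^ (k + 1))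

/-- The theta function `(p; p)_∞ (x; p)_∞ (p / x; p)_∞` in product form. -/
noncomputable def thetaProd {𝕜 : Type*} [NormedField 𝕜] (p x : 𝕜) : 𝕜 :=
  eulerProd p * qPochhammer x p * qPochhammer (p / x) p

section Products

variable {𝕜 : Type*} [NormedField 𝕜] {p q x : 𝕜}

lemma norm_pow_lt_one_of_ne_zero (hq : ‖q‖ < 1) {n : ℕ} (hn : n ≠ 0) : ‖q ^ n‖ < 1 := by
  rw [norm_pow]
  exact pow_lt_one₀ (norm_nonneg _) hq hn

lemma norm_mul_pow_lt_one (hx : ‖x‖ < 1) (hp : ‖p‖ < 1) (k : ℕ) : ‖x * p ^ k‖ < 1 := by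
  rw [norm_mul, norm_pow]
  exact mul_lt_one_of_nonneg_of_lt_one_left (norm_nonneg _) hx
    (pow_le_one₀ (norm_nonneg _) hp.le)

lemma one_sub_ne_zero_of_norm_lt_one (hx : ‖x‖ < 1) : 1 - x ≠ 0 := by
  rintro h
  simp [← sub_eq_zero.1 h] at hx

lemma summable_norm_mul_pow (x : 𝕜) (hp : ‖p‖ < 1) : Summable fun k : ℕ ↦ ‖x * p ^ k‖ := by
  simp only [norm_mul, norm_pow]
  exact (summable_geometric_of_lt_one (norm_nonneg _) hp).mul_left _

lemma eulerProd_eq_qPochhammer (q : 𝕜) : eulerProd q = qPochhammer q q := by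
  simp only [eulerProd, qPochhammer, pow_succ']

lemma thetaProd_div (hp : p ≠ 0) (x : 𝕜) : thetaProd p (p / x) = thetaProd p x := by
  simp only [thetaProd, div_div_cancel₀ hp]
  ring

variable [CompleteSpace 𝕜]

lemma hasProd_qPochhammer (x : 𝕜) (hp : ‖p‖ < 1) :
    HasProd (fun k : ℕ ↦ 1 - x * p ^ k) (qPochhammer x p) := by
  have h := multipliable_one_add_of_summable (f := fun k : ℕ ↦ -(x * p ^ k))
    (by simpa only [norm_neg] using summable_norm_mul_pow x hp)
  simpa only [qPochhammer, sub_eq_add_neg] using h.hasProd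

lemma tendsto_prod_range_qPochhammer (x : 𝕜) (hp : ‖p‖ < 1) :
    Tendsto (fun n ↦ ∏ k ∈ Finset.range n, (1 - x * p ^ k)) atTop (𝓝 (qPochhammer x p)) :=
  (hasProd_qPochhammer x hp).tendsto_prod_nat

lemma hasProd_eulerProd (hq : ‖q‖ < 1) : HasProd (fun k : ℕ ↦ 1 - q ^ (k + 1)) (eulerProd q) := by
  simpa only [eulerProd_eq_qPochhammer, pow_succ'] using hasProd_qPochhammer q hq

lemma hasProd_eulerProd_pow (hq : ‖q‖ < 1) {n : ℕ} (hn : n ≠ 0) :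
    HasProd (fun j : ℕ ↦ 1 - q ^ (n * (j + 1))) (eulerProd (q ^ n)) := by
  simpa only [← pow_mul] using hasProd_eulerProd (norm_pow_lt_one_of_ne_zero hq hn)

lemma qPochhammer_ne_zero (hp : ‖p‖ < 1) (h : ∀ k : ℕ, 1 - x * p ^ k ≠ 0) :
    qPochhammer x p ≠ 0 := by
  have := tprod_one_add_ne_zero_of_summable (f := fun k : ℕ ↦ -(x * p ^ k))
    (by simpa only [← sub_eq_add_neg] using h)
    (by simpa only [norm_neg] using summable_norm_mul_pow x hp)
  simpa only [qPochhammer, sub_eq_add_neg] using this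

lemma eulerProd_ne_zero (hq : ‖q‖ < 1) : eulerProd q ≠ 0 := by
  rw [eulerProd_eq_qPochhammer]
  exact qPochhammer_ne_zero hq fun k ↦
    one_sub_ne_zero_of_norm_lt_one (norm_mul_pow_lt_one hq hq k)

lemma eulerProd_pow_ne_zero (hq : ‖q‖ < 1) {n : ℕ} (hn : n ≠ 0) : eulerProd (q ^ n) ≠ 0 :=
  eulerProd_ne_zero (norm_pow_lt_one_of_ne_zero hq hn)

lemma qPochhammer_eq_one_sub_mul (x : 𝕜) (hp : ‖p‖ < 1) :
    qPochhammer x p = (1 - x) * qPochhammer (x * p) p := by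
  have h : HasProd (fun k : ℕ ↦ 1 - x * p ^ (k + 1)) (qPochhammer (x * p) p) := by
    simpa only [pow_succ', mul_assoc] using hasProd_qPochhammer (x * p) hp
  have h_head := (h.zero_mul (f := fun k ↦ 1 - x * p ^ k))
  rw [pow_zero, mul_one] at h_head
  exact (hasProd_qPochhammer x hp).unique h_head

lemma qPochhammer_eq_prod_residues (x : 𝕜) (hp : ‖p‖ < 1) (n : ℕ) [NeZero n] :
    qPochhammer x p = ∏ i : Fin n, qPochhammer (x * p ^ (i : ℕ)) (p ^ n) := by
  have h : HasProd (fun c : Fin n × ℕ ↦ 1 - x * p ^ (c.1 : ℕ) * (p ^ n) ^ c.2)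
      (qPochhammer x p) := by
    have h_equiv := ((Equiv.prodComm (Fin n) ℕ).trans (Nat.divModEquiv n).symm).hasProd_iff.2
      (hasProd_qPochhammer x hp)
    convert h_equiv using 2 with c
    simp only [Function.comp_apply, Equiv.trans_apply, Equiv.prodComm_apply,
      Nat.divModEquiv_symm_apply, Prod.fst_swap, Prod.snd_swap]
    ring
  have hpn : ‖p ^ n‖ < 1 := norm_pow_lt_one_of_ne_zero hp (NeZero.ne n)
  have h_fiber := h.prod_fiberwise fun i ↦ hasProd_qPochhammer (x * p ^ (i : ℕ)) hpn
  rw [← h_fiber.tprod_eq, tprod_fintype]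

lemma qPochhammer_mul_neg (x : 𝕜) (hp : ‖p‖ < 1) :
    qPochhammer x p * qPochhammer (-x) p = qPochhammer (x ^ 2) (p ^ 2) := by
  have h := (hasProd_qPochhammer x hp).mul (hasProd_qPochhammer (-x) hp)
  refine h.unique ?_
  convert hasProd_qPochhammer (x ^ 2) (norm_pow_lt_one_of_ne_zero hp two_ne_zero) using 2
  ring

lemma eulerProd_mul_qPochhammer_neg (hq : ‖q‖ < 1) :
    eulerProd q * qPochhammer (-q) q = eulerProd (q ^ 2) := by
  rw [eulerProd_eq_qPochhammer, qPochhammer_mul_neg q hq, eulerProd_eq_qPochhammer]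

lemma eulerProd_eq_qPochhammer_sq_mul (hq : ‖q‖ < 1) :
    eulerProd q = qPochhammer q (q ^ 2) * eulerProd (q ^ 2) := by
  simp only [eulerProd_eq_qPochhammer, qPochhammer_eq_prod_residues q hq 2, Fin.prod_univ_two,
    Fin.coe_ofNat_eq_mod, Nat.zero_mod, Nat.one_mod, pow_zero, pow_one, mul_one, sq]

lemma eulerProd_neg_mul (hq : ‖q‖ < 1) :
    eulerProd (-q) * eulerProd q * eulerProd (q ^ 4) = eulerProd (q ^ 2) ^ 3 := by
  have h2 : ‖q ^ 2‖ < 1 := norm_pow_lt_one_of_ne_zero hq two_ne_zero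
  have h_neg := qPochhammer_mul_neg q h2
  have h_sq := eulerProd_eq_qPochhammer_sq_mul h2
  rw [show (q ^ 2) ^ 2 = q ^ 4 by ring] at h_neg h_sq
  rw [eulerProd_eq_qPochhammer_sq_mul hq, eulerProd_eq_qPochhammer_sq_mul (by rwa [norm_neg]),
    neg_sq]
  linear_combination eulerProd (q ^ 2) ^ 2 * eulerProd (q ^ 4) * h_neg -
    eulerProd (q ^ 2) ^ 2 * h_sq

lemma thetaProd_inv (hx : x ≠ 0) (hp : ‖p‖ < 1) :
    thetaProd p x⁻¹ = -thetaProd p x / x := by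
  simp only [thetaProd]
  rw [qPochhammer_eq_one_sub_mul x hp, qPochhammer_eq_one_sub_mul x⁻¹ hp,
    show p / x⁻¹ = x * p by field_simp, show x⁻¹ * p = p / x by field_simp]
  field_simp
  ring

lemma thetaProd_neg_one (hp : ‖p‖ < 1) :
    thetaProd p (-1) = 2 * eulerProd (p ^ 2) ^ 2 / eulerProd p := by
  have h0 := eulerProd_ne_zero hp
  rw [thetaProd, qPochhammer_eq_one_sub_mul (-1) hp, neg_one_mul, div_neg, div_one,
    ← eulerProd_mul_qPochhammer_neg hp]
  field_simp
  ring

lemma thetaProd_cube_self (hq : ‖q‖ < 1) (h0 : q ≠ 0) : thetaProd (q ^ 3) q = eulerProd q := by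
  have h_split := qPochhammer_eq_prod_residues q hq 3
  simp only [Fin.prod_univ_three, Fin.coe_ofNat_eq_mod] at h_split
  rw [eulerProd_eq_qPochhammer q, h_split, thetaProd, eulerProd_eq_qPochhammer,
    show q ^ 3 / q = q * q by field_simp]
  norm_num
  ring_nf

lemma thetaProd_sq_self (hq : ‖q‖ < 1) (h0 : q ≠ 0) :
    thetaProd (q ^ 2) q = eulerProd q ^ 2 / eulerProd (q ^ 2) := by
  have h2 := eulerProd_pow_ne_zero hq two_ne_zero
  rw [thetaProd, show q ^ 2 / q = q by field_simp, eulerProd_eq_qPochhammer_sq_mul hq]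
  field_simp

lemma thetaProd_pow_six_self (hq : ‖q‖ < 1) (h0 : q ≠ 0) :
    thetaProd (q ^ 6) q =
      eulerProd q * eulerProd (q ^ 6) ^ 2 / (eulerProd (q ^ 2) * eulerProd (q ^ 3)) := by
  have h_odd := eulerProd_eq_qPochhammer_sq_mul hq
  have h_odd3 := eulerProd_eq_qPochhammer_sq_mul (norm_pow_lt_one_of_ne_zero hq three_ne_zero)
  have h_split := qPochhammer_eq_prod_residues q (norm_pow_lt_one_of_ne_zero hq two_ne_zero) 3
  simp only [Fin.prod_univ_three, Fin.coe_ofNat_eq_mod, ← pow_mul, ← pow_succ', Nat.reduceMod,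
    Nat.reduceMul, Nat.reduceAdd, pow_one] at h_split h_odd3
  rw [eq_div_iff (mul_ne_zero (eulerProd_pow_ne_zero hq two_ne_zero)
    (eulerProd_pow_ne_zero hq three_ne_zero)), h_odd, h_split, h_odd3, thetaProd,
    show q ^ 6 / q = q ^ 5 by field_simp]
  ring

lemma thetaProd_mul_neg (hp : ‖p‖ < 1) (x : 𝕜) :
    thetaProd p x * thetaProd p (-x) * eulerProd (p ^ 2) =
      eulerProd p ^ 2 * thetaProd (p ^ 2) (x ^ 2) := by
  have h1 := qPochhammer_mul_neg x hp
  have h2 := qPochhammer_mul_neg (p / x) hp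
  simp only [thetaProd, div_neg, ← div_pow, ← h1, ← h2]
  ring

lemma thetaProd_cube_neg (hq : ‖q‖ < 1) (h0 : q ≠ 0) :
    thetaProd (q ^ 3) (-q) =
      eulerProd (q ^ 2) * eulerProd (q ^ 3) ^ 2 / (eulerProd q * eulerProd (q ^ 6)) := by
  have h3 := norm_pow_lt_one_of_ne_zero hq three_ne_zero
  have h2 := norm_pow_lt_one_of_ne_zero hq two_ne_zero
  have h := thetaProd_mul_neg h3 q
  have h_sq := thetaProd_cube_self h2 (pow_ne_zero 2 h0)
  rw [show (q ^ 2) ^ 3 = (q ^ 3) ^ 2 by ring] at h_sq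
  rw [thetaProd_cube_self hq h0, h_sq, show (q ^ 3) ^ 2 = q ^ 6 by ring] at h
  rw [eq_div_iff (mul_ne_zero (eulerProd_ne_zero hq) (eulerProd_pow_ne_zero hq (by norm_num)))]
  linear_combination h

end Products

section Real

variable {p q x : ℝ}

lemma qPochhammer_pos (hx : ‖x‖ < 1) (hp : ‖p‖ < 1) : 0 < qPochhammer x p := by
  have h_pos : ∀ k : ℕ, 0 < 1 - x * p ^ k := fun k ↦
    sub_pos.2 ((le_abs_self _).trans_lt (norm_mul_pow_lt_one hx hp k))
  refine lt_of_le_of_ne ?_ (qPochhammer_ne_zero hp fun k ↦ (h_pos k).ne').symm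
  exact ge_of_tendsto' (tendsto_prod_range_qPochhammer x hp) fun n ↦
    Finset.prod_nonneg fun k _ ↦ (h_pos k).le

lemma eulerProd_pos (hq : ‖q‖ < 1) : 0 < eulerProd q := by
  rw [eulerProd_eq_qPochhammer]
  exact qPochhammer_pos hq hq

lemma eulerProd_pow_pos (hq : ‖q‖ < 1) {n : ℕ} (hn : n ≠ 0) : 0 < eulerProd (q ^ n) :=
  eulerProd_pos (norm_pow_lt_one_of_ne_zero hq hn)

lemma U1_eq_eulerProd (hq : ‖q‖ < 1) :
    U1 q = eulerProd (q ^ 2) ^ 8 * eulerProd (q ^ 3) ^ 6 / eulerProd q ^ 10 :=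
  ((((hasProd_eulerProd_pow hq two_ne_zero).pow 8).mul
    ((hasProd_eulerProd_pow hq three_ne_zero).pow 6)).div₀ ((hasProd_eulerProd hq).pow 10)
    (pow_ne_zero _ (eulerProd_ne_zero hq))).tprod_eq

lemma V1_eq_eulerProd (hq : ‖q‖ < 1) :
    V1 q = q * (eulerProd (q ^ 2) * eulerProd (q ^ 6) ^ 5 /
      (eulerProd q ^ 5 * eulerProd (q ^ 3))) :=
  congrArg (q * ·) (((hasProd_eulerProd_pow hq two_ne_zero).mul
    ((hasProd_eulerProd_pow hq (n := 6) (by norm_num)).pow 5)).div₀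
    (((hasProd_eulerProd hq).pow 5).mul (hasProd_eulerProd_pow hq three_ne_zero))
    (mul_ne_zero (pow_ne_zero _ (eulerProd_ne_zero hq))
      (eulerProd_pow_ne_zero hq three_ne_zero))).tprod_eq

end Real

/-! ### The q-binomial theorem and the Jacobi triple product -/

/-- The finite product `(p; p)_m`. -/
def finEulerProd {R : Type*} [CommRing R] (p : R) (m : ℕ) : R :=
  ∏ k ∈ Finset.range m, (1 - p ^ (k + 1))

/-- The Gaussian binomial coefficient, defined by the `q`-Pascal recursion so that it makes sense
without dividing by `1 - p ^ k`. -/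
def gaussBinom {R : Type*} [CommRing R] (p : R) : ℕ → ℕ → R
  | _, 0 => 1
  | 0, _ + 1 => 0
  | N + 1, k + 1 => gaussBinom p N (k + 1) + p ^ (N - k) * gaussBinom p N k

section GaussBinom

variable {R : Type*} [CommRing R] (p : R)

lemma finEulerProd_succ (m : ℕ) :
    finEulerProd p (m + 1) = finEulerProd p m * (1 - p ^ (m + 1)) :=
  Finset.prod_range_succ _ _

lemma gaussBinom_zero_right (N : ℕ) : gaussBinom p N 0 = 1 := by cases N <;> rfl

lemma gaussBinom_succ_succ (N k : ℕ) :
    gaussBinom p (N + 1) (k + 1) = gaussBinom p N (k + 1) + p ^ (N - k) * gaussBinom p N k := rfl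

lemma gaussBinom_eq_zero_of_lt {N k : ℕ} (h : N < k) : gaussBinom p N k = 0 := by
  induction N generalizing k with
  | zero =>
    obtain ⟨k, rfl⟩ := Nat.exists_eq_succ_of_ne_zero h.ne'
    rfl
  | succ N ih =>
    obtain ⟨k, rfl⟩ := Nat.exists_eq_succ_of_ne_zero (Nat.ne_zero_of_lt h)
    rw [Nat.succ_eq_add_one, gaussBinom_succ_succ, ih (by omega), ih (by omega), mul_zero,
      add_zero]

lemma gaussBinom_mul_finEulerProd {N k : ℕ} (h : k ≤ N) :
    gaussBinom p N k * finEulerProd p k * finEulerProd p (N - k) = finEulerProd p N := by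
  induction N generalizing k with
  | zero =>
    obtain rfl : k = 0 := by omega
    simp [gaussBinom_zero_right, finEulerProd]
  | succ N ih =>
    rcases k with _ | k
    · simp [gaussBinom_zero_right, finEulerProd]
    rw [gaussBinom_succ_succ, Nat.add_sub_add_right]
    rcases (Nat.succ_le_succ_iff.1 h).lt_or_eq with hlt | rfl
    · obtain ⟨d, rfl⟩ : ∃ d, N = k + 1 + d := ⟨N - (k + 1), by omega⟩
      have ih_succ := ih hlt
      have ih_self := ih (show k ≤ k + 1 + d by omega)
      rw [show k + 1 + d - (k + 1) = d by omega] at ih_succ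
      rw [show k + 1 + d - k = d + 1 by omega] at ih_self ⊢
      rw [finEulerProd_succ p (k + 1 + d), show k + 1 + d + 1 = (k + 1) + (d + 1) by ring, pow_add]
      rw [finEulerProd_succ p k] at ih_succ ⊢
      rw [finEulerProd_succ p d] at ih_self ⊢
      linear_combination (1 - p ^ (d + 1)) * ih_succ + p ^ (d + 1) * (1 - p ^ (k + 1)) * ih_self
    · have ih_self := ih le_rfl
      rw [gaussBinom_eq_zero_of_lt p k.lt_succ_self, finEulerProd_succ]
      rw [Nat.sub_self] at ih_self ⊢
      linear_combination (1 - p ^ (k + 1)) * ih_self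

lemma prod_one_add_mul_pow_eq_sum_gaussBinom (z : R) (N : ℕ) :
    ∏ k ∈ Finset.range N, (1 + z * p ^ k) =
      ∑ k ∈ Finset.range (N + 1), gaussBinom p N k * p ^ k.choose 2 * z ^ k := by
  induction N with
  | zero => simp [gaussBinom_zero_right]
  | succ N ih =>
    have h_shift : ∑ k ∈ Finset.range (N + 1), gaussBinom p N k * p ^ k.choose 2 * z ^ k =
        ∑ k ∈ Finset.range (N + 1),
          gaussBinom p N (k + 1) * p ^ (k + 1).choose 2 * z ^ (k + 1) + 1 := by
      rw [Finset.sum_range_succ', Finset.sum_range_succ _ N,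
        gaussBinom_eq_zero_of_lt p N.lt_succ_self]
      simp [gaussBinom_zero_right]
    rw [Finset.prod_range_succ, ih, mul_add, mul_one, Finset.sum_range_succ' _ (N + 1),
      Finset.sum_mul]
    nth_rewrite 1 [h_shift]
    rw [add_right_comm, ← Finset.sum_add_distrib]
    congr 1
    · refine Finset.sum_congr rfl fun k hk ↦ ?_
      have h_exp : p ^ (N - k) * p ^ (k + 1).choose 2 = p ^ N * p ^ k.choose 2 := by
        have hk' := Finset.mem_range_succ_iff.1 hk
        rw [← pow_add, ← pow_add, Nat.choose_succ_succ' k 1, Nat.choose_one_right]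
        congr 1
        grind
      rw [gaussBinom_succ_succ]
      linear_combination (-gaussBinom p N k * z ^ (k + 1)) * h_exp
    · simp [gaussBinom_zero_right]

end GaussBinom

/-- The exponent `j (j - 1) / 2` of the theta series. -/
def tri (j : ℤ) : ℤ := j * (j - 1) / 2

lemma two_mul_tri (j : ℤ) : 2 * tri j = j * (j - 1) :=
  Int.mul_ediv_cancel' (Int.even_mul_pred_self j).two_dvd

lemma tri_natCast (k : ℕ) : tri k = (k.choose 2 : ℕ) := by
  have h : ((k * (k - 1) : ℕ) : ℤ) = k * (k - 1) := by cases k <;> simp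
  rw [Nat.choose_two_right, tri, ← h, Int.natCast_div, Nat.cast_ofNat]

/-- The general term `(-x) ^ j p ^ (j (j - 1) / 2)` of the theta series. -/
noncomputable def thetaTerm {𝕜 : Type*} [Field 𝕜] (p x : 𝕜) (j : ℤ) : 𝕜 := (-x) ^ j * p ^ tri j

section FiniteTripleProduct

variable {𝕜 : Type*} [Field 𝕜] {p x : 𝕜}

lemma prod_range_pow_succ (p : 𝕜) (n : ℕ) :
    ∏ k ∈ Finset.range n, p ^ (k + 1) = p ^ (n + 1).choose 2 := by
  rw [Finset.prod_pow_eq_pow_sum, Nat.choose_two_right, ← Finset.sum_range_id,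
    Finset.sum_range_succ', add_zero]

lemma prod_range_one_sub_mul_pow_reflect (hp : p ≠ 0) (hx : x ≠ 0) (n : ℕ) :
    ∏ k ∈ Finset.range n, (1 + -x * (p ^ n)⁻¹ * p ^ k) =
      (-x) ^ n * (p ^ (n + 1).choose 2)⁻¹ * ∏ k ∈ Finset.range n, (1 - p / x * p ^ k) := by
  have h_factor : ∀ k ∈ Finset.range n, 1 + -x * (p ^ n)⁻¹ * p ^ (n - 1 - k) =
      -x * (p ^ (k + 1))⁻¹ * (1 - p / x * p ^ k) := by
    intro k hk
    obtain ⟨d, rfl⟩ : ∃ d, n = d + (k + 1) := ⟨n - (k + 1), by have := Finset.mem_range.1 hk; omega⟩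
    rw [show d + (k + 1) - 1 - k = d by omega, pow_add]
    field_simp
    ring
  rw [← Finset.prod_range_reflect, Finset.prod_congr rfl h_factor, Finset.prod_mul_distrib,
    Finset.prod_mul_distrib, Finset.prod_inv_distrib, prod_range_pow_succ, Finset.prod_const,
    Finset.card_range]

lemma pow_mul_inv_pow_eq_mul_thetaTerm (hp : p ≠ 0) (hx : x ≠ 0) (n k : ℕ) :
    p ^ k.choose 2 * (-x * (p ^ n)⁻¹) ^ k =
      (-x) ^ n * (p ^ (n + 1).choose 2)⁻¹ * thetaTerm p x (k - n) := by
  have h_x : (-x) ^ k = (-x) ^ n * (-x) ^ ((k : ℤ) - n) := by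
    rw [← zpow_natCast, ← zpow_natCast, ← zpow_add₀ (neg_ne_zero.2 hx), add_sub_cancel]
  have h_p : p ^ k.choose 2 * ((p ^ n)⁻¹) ^ k =
      (p ^ (n + 1).choose 2)⁻¹ * p ^ tri ((k : ℤ) - n) := by
    rw [inv_pow, ← pow_mul]
    simp only [← zpow_natCast, ← zpow_neg, ← zpow_add₀ hp, ← tri_natCast]
    congr 1
    have h_k := two_mul_tri k
    have h_sub := two_mul_tri ((k : ℤ) - n)
    have h_succ := two_mul_tri ((n + 1 : ℕ) : ℤ)
    push_cast at *
    nlinarith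
  rw [thetaTerm, mul_pow, h_x]
  linear_combination ((-x) ^ n * (-x) ^ ((k : ℤ) - n)) * h_p

lemma finite_jacobi_triple_product (hp : p ≠ 0) (hx : x ≠ 0) (n : ℕ) :
    (∏ k ∈ Finset.range n, (1 - x * p ^ k)) * ∏ k ∈ Finset.range n, (1 - p / x * p ^ k) =
      ∑ j ∈ Finset.Icc (-(n : ℤ)) n, gaussBinom p (2 * n) (n + j).toNat * thetaTerm p x j := by
  have h_left : ∏ k ∈ Finset.range (2 * n), (1 + -x * (p ^ n)⁻¹ * p ^ k) =
      (-x) ^ n * (p ^ (n + 1).choose 2)⁻¹ * ((∏ k ∈ Finset.range n, (1 - x * p ^ k)) *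
        ∏ k ∈ Finset.range n, (1 - p / x * p ^ k)) := by
    have h_upper : ∏ k ∈ Finset.range n, (1 + -x * (p ^ n)⁻¹ * p ^ (n + k)) =
        ∏ k ∈ Finset.range n, (1 - x * p ^ k) := by
      refine Finset.prod_congr rfl fun k _ ↦ ?_
      rw [pow_add]
      field_simp
      ring
    rw [two_mul, Finset.prod_range_add, h_upper, prod_range_one_sub_mul_pow_reflect hp hx]
    ring
  have h_const : (-x) ^ n * (p ^ (n + 1).choose 2)⁻¹ ≠ 0 := by
    simp [hp, hx]
  apply mul_left_cancel₀ h_const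
  rw [← h_left, prod_one_add_mul_pow_eq_sum_gaussBinom, Finset.mul_sum]
  refine Finset.sum_nbij' (fun k ↦ (k : ℤ) - n) (fun j ↦ (n + j).toNat) ?_ ?_ ?_ ?_ ?_
  all_goals intro k hk; simp only [Finset.mem_Icc, Finset.mem_range] at hk ⊢
  any_goals omega
  rw [mul_assoc, pow_mul_inv_pow_eq_mul_thetaTerm hp hx,
    show ((n : ℤ) + (k - n)).toNat = k by omega]
  ring

end FiniteTripleProduct

section TripleProduct

lemma summable_pow_mul_pow_choose_two {a r : ℝ} (ha : 0 < a) (hr : 0 < r) (hr1 : r < 1) :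
    Summable fun m : ℕ ↦ a ^ m * r ^ m.choose 2 := by
  refine summable_of_ratio_test_tendsto_lt_one (l := 0) zero_lt_one
    (Eventually.of_forall fun n ↦ by positivity) ?_
  have h_ratio : Tendsto (fun n : ℕ ↦ a * r ^ n) atTop (𝓝 0) := by
    simpa using (tendsto_pow_atTop_nhds_zero_of_lt_one hr.le hr1).const_mul a
  refine h_ratio.congr fun n ↦ ?_
  rw [Nat.choose_succ_succ' n 1, Nat.choose_one_right, Real.norm_of_nonneg (by positivity),
    Real.norm_of_nonneg (by positivity)]
  field_simp
  ring

variable {𝕜 : Type*} [NormedField 𝕜] {p x : 𝕜}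

lemma summable_norm_thetaTerm (hp1 : ‖p‖ < 1) (hp : p ≠ 0) (hx : x ≠ 0) :
    Summable fun j : ℤ ↦ ‖thetaTerm p x j‖ := by
  have hp' : 0 < ‖p‖ := norm_pos_iff.2 hp
  have hx' : 0 < ‖x‖ := norm_pos_iff.2 hx
  refine Summable.of_nat_of_neg ?_ ?_
  · refine (summable_pow_mul_pow_choose_two hx' hp' hp1).congr fun m ↦ ?_
    rw [thetaTerm, tri_natCast, zpow_natCast, zpow_natCast, norm_mul, norm_pow, norm_pow, norm_neg]
  · refine (summable_pow_mul_pow_choose_two (mul_pos (inv_pos.2 hx') hp') hp' hp1).congr fun m ↦ ?_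
    have h_tri : tri (-m) = (m + m.choose 2 : ℕ) := by
      have h_pos := two_mul_tri m
      have h_neg := two_mul_tri (-m)
      push_cast
      rw [← tri_natCast]
      linarith
    rw [thetaTerm, h_tri, zpow_natCast, zpow_neg, zpow_natCast, norm_mul, norm_inv, norm_pow,
      norm_pow, norm_neg, mul_pow, pow_add, inv_pow, mul_assoc]

lemma finEulerProd_ne_zero (hp : ‖p‖ < 1) (m : ℕ) : finEulerProd p m ≠ 0 :=
  Finset.prod_ne_zero_iff.2 fun k _ ↦
    one_sub_ne_zero_of_norm_lt_one (norm_pow_lt_one_of_ne_zero hp k.succ_ne_zero)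

lemma gaussBinom_eq_finEulerProd (hp : ‖p‖ < 1) {N k : ℕ} (h : k ≤ N) :
    gaussBinom p N k = finEulerProd p N * (finEulerProd p k)⁻¹ * (finEulerProd p (N - k))⁻¹ := by
  rw [← gaussBinom_mul_finEulerProd p h]
  have := finEulerProd_ne_zero hp k
  have := finEulerProd_ne_zero hp (N - k)
  field_simp

variable [CompleteSpace 𝕜]

lemma tendsto_finEulerProd (hp : ‖p‖ < 1) : Tendsto (finEulerProd p) atTop (𝓝 (eulerProd p)) :=
  (hasProd_eulerProd hp).tendsto_prod_nat

lemma tendsto_inv_finEulerProd (hp : ‖p‖ < 1) :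
    Tendsto (fun m ↦ (finEulerProd p m)⁻¹) atTop (𝓝 (eulerProd p)⁻¹) :=
  (tendsto_finEulerProd hp).inv₀ (eulerProd_ne_zero hp)

lemma exists_norm_gaussBinom_le (hp : ‖p‖ < 1) :
    ∃ M, 0 ≤ M ∧ ∀ N k, k ≤ N → ‖gaussBinom p N k‖ ≤ M := by
  obtain ⟨A, hA⟩ := (tendsto_finEulerProd hp).norm.bddAbove_range
  obtain ⟨B, hB⟩ := (tendsto_inv_finEulerProd hp).norm.bddAbove_range
  have hA' : ∀ m, ‖finEulerProd p m‖ ≤ A := fun m ↦ hA ⟨m, rfl⟩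
  have hB' : ∀ m, ‖(finEulerProd p m)⁻¹‖ ≤ B := fun m ↦ hB ⟨m, rfl⟩
  have hA0 : 0 ≤ A := (norm_nonneg _).trans (hA' 0)
  have hB0 : 0 ≤ B := (norm_nonneg _).trans (hB' 0)
  refine ⟨A * B * B, by positivity, fun N k hk ↦ ?_⟩
  rw [gaussBinom_eq_finEulerProd hp hk, norm_mul, norm_mul]
  gcongr
  exacts [hA' _, hB' _, hB' _]

lemma tendsto_gaussBinom_two_mul (hp : ‖p‖ < 1) (j : ℤ) :
    Tendsto (fun n : ℕ ↦ gaussBinom p (2 * n) (n + j).toNat) atTop (𝓝 (eulerProd p)⁻¹) := by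
  have h_top : Tendsto (fun n : ℕ ↦ finEulerProd p (2 * n)) atTop (𝓝 (eulerProd p)) :=
    (tendsto_finEulerProd hp).comp (tendsto_id.const_mul_atTop' two_pos)
  have h_low : Tendsto (fun n : ℕ ↦ (finEulerProd p (n + j).toNat)⁻¹) atTop
      (𝓝 (eulerProd p)⁻¹) := by
    refine (tendsto_inv_finEulerProd hp).comp (tendsto_atTop.2 fun b ↦ ?_)
    filter_upwards [eventually_ge_atTop (b + j.natAbs)] with n hn
    omega
  have h_high : Tendsto (fun n : ℕ ↦ (finEulerProd p (2 * n - (n + j).toNat))⁻¹) atTop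
      (𝓝 (eulerProd p)⁻¹) := by
    refine (tendsto_inv_finEulerProd hp).comp (tendsto_atTop.2 fun b ↦ ?_)
    filter_upwards [eventually_ge_atTop (b + j.natAbs)] with n hn
    omega
  have h := (h_top.mul h_low).mul h_high
  rw [mul_inv_cancel₀ (eulerProd_ne_zero hp), one_mul] at h
  refine h.congr' ?_
  filter_upwards [eventually_ge_atTop j.natAbs] with n hn
  rw [gaussBinom_eq_finEulerProd hp (by omega)]

theorem hasSum_thetaTerm (hp1 : ‖p‖ < 1) (hp : p ≠ 0) (hx : x ≠ 0) :
    HasSum (thetaTerm p x) (thetaProd p x) := by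
  obtain ⟨M, hM0, hM⟩ := exists_norm_gaussBinom_le hp1
  have h_summable := summable_norm_thetaTerm hp1 hp hx
  let F (n : ℕ) (j : ℤ) : 𝕜 := gaussBinom p (2 * n) (n + j).toNat * thetaTerm p x j
  let S (n : ℕ) : Finset ℤ := Finset.Icc (-(n : ℤ)) n
  have h_series : Tendsto (fun n ↦ ∑' j, (S n : Set ℤ).indicator (F n) j) atTop
      (𝓝 (∑' j : ℤ, (eulerProd p)⁻¹ * thetaTerm p x j)) := by
    refine tendsto_tsum_of_dominated_convergence (h_summable.mul_left M) (fun j ↦ ?_)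
      (Eventually.of_forall fun n j ↦ ?_)
    · refine ((tendsto_gaussBinom_two_mul hp1 j).mul_const _).congr' ?_
      filter_upwards [eventually_ge_atTop j.natAbs] with n hn
      rw [Set.indicator_of_mem (by simp only [S, Finset.coe_Icc, Set.mem_Icc]; omega)]
    · by_cases hj : j ∈ (S n : Set ℤ)
      · have hjn : (n + j).toNat ≤ 2 * n := by
          simp only [S, Finset.coe_Icc, Set.mem_Icc] at hj
          omega
        rw [Set.indicator_of_mem hj, norm_mul]
        gcongr
        exact hM _ _ hjn
      · rw [Set.indicator_of_notMem hj, norm_zero]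
        positivity
  have h_products := (tendsto_prod_range_qPochhammer x hp1).mul
    (tendsto_prod_range_qPochhammer (p / x) hp1)
  have h_lim := tendsto_nhds_unique h_series (h_products.congr fun n ↦
    (finite_jacobi_triple_product hp hx n).trans (sum_eq_tsum_indicator (F n) (S n)))
  rw [tsum_mul_left, inv_mul_eq_iff_eq_mul₀ (eulerProd_ne_zero hp1), ← mul_assoc] at h_lim
  rw [thetaProd, ← h_lim]
  exact h_summable.of_norm.hasSum

end TripleProduct

/-! ### Theta function identities -/

/-- Pairs of integers of equal parity (left summand) and of opposite parity (right summand): the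
change of summation variables that factors a product of two theta series. -/
def parityEquiv : (ℤ × ℤ) ⊕ (ℤ × ℤ) ≃ ℤ × ℤ where
  toFun := Sum.elim (fun a ↦ (a.1 + a.2, a.1 - a.2)) (fun a ↦ (a.1 + a.2, a.1 - a.2 + 1))
  invFun m := if (m.1 + m.2) % 2 = 0 then Sum.inl ((m.1 + m.2) / 2, (m.1 - m.2) / 2)
    else Sum.inr ((m.1 + m.2) / 2, (m.1 - m.2 + 1) / 2)
  left_inv := by rintro (⟨a, b⟩ | ⟨a, b⟩) <;> grind
  right_inv := by rintro ⟨m, n⟩; grind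

section ThetaIdentities

variable {𝕜 : Type*} [NormedField 𝕜] {p q x y z w : 𝕜}

lemma thetaTerm_mul_thetaTerm (hp : p ≠ 0) (hx : x ≠ 0) (hy : y ≠ 0) (m n : ℤ) :
    thetaTerm p (x * y) m * thetaTerm p (x / y) n =
      (-1) ^ (m + n) * x ^ (m + n) * y ^ (m - n) * p ^ (tri m + tri n) := by
  rw [thetaTerm, thetaTerm, neg_eq_neg_one_mul (x * y), neg_eq_neg_one_mul (x / y), mul_zpow,
    mul_zpow, mul_zpow, div_zpow, zpow_add₀ (neg_ne_zero.2 one_ne_zero), zpow_add₀ hx,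
    zpow_add₀ hp, zpow_sub₀ hy]
  ring

lemma thetaTerm_sq_neg_sq (p x : 𝕜) (j : ℤ) :
    thetaTerm (p ^ 2) (-x ^ 2) j = x ^ (2 * j) * p ^ (2 * tri j) := by
  simp only [thetaTerm, neg_neg, zpow_mul, zpow_ofNat]

lemma thetaTerm_sq_neg_mul_sq (hp : p ≠ 0) (x : 𝕜) (j : ℤ) :
    thetaTerm (p ^ 2) (-(p * x ^ 2)) j = x ^ (2 * j) * p ^ (j + 2 * tri j) := by
  simp only [thetaTerm, neg_neg, zpow_mul, zpow_ofNat, mul_zpow, zpow_add₀ hp]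
  ring

lemma thetaTerm_mul_thetaTerm_even (hp : p ≠ 0) (hx : x ≠ 0) (hy : y ≠ 0) (a b : ℤ) :
    thetaTerm p (x * y) (a + b) * thetaTerm p (x / y) (a - b) =
      thetaTerm (p ^ 2) (-x ^ 2) a * thetaTerm (p ^ 2) (-(p * y ^ 2)) b := by
  have h_tri : tri (a + b) + tri (a - b) = 2 * tri a + (b + 2 * tri b) := by
    linarith [two_mul_tri (a + b), two_mul_tri (a - b), two_mul_tri a, two_mul_tri b]
  rw [thetaTerm_mul_thetaTerm hp hx hy, thetaTerm_sq_neg_sq, thetaTerm_sq_neg_mul_sq hp, h_tri,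
    zpow_add₀ hp, show a + b + (a - b) = 2 * a by ring, show a + b - (a - b) = 2 * b by ring,
    (even_two_mul a).neg_one_zpow]
  ring

lemma thetaTerm_mul_thetaTerm_odd (hp : p ≠ 0) (hx : x ≠ 0) (hy : y ≠ 0) (a b : ℤ) :
    thetaTerm p (x * y) (a + b) * thetaTerm p (x / y) (a - b + 1) =
      -(x / y) * (thetaTerm (p ^ 2) (-(p * x ^ 2)) a * thetaTerm (p ^ 2) (-y ^ 2) b) := by
  have h_tri : tri (a + b) + tri (a - b + 1) = (a + 2 * tri a) + 2 * tri b := by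
    linarith [two_mul_tri (a + b), two_mul_tri (a - b + 1), two_mul_tri a, two_mul_tri b]
  rw [thetaTerm_mul_thetaTerm hp hx hy, thetaTerm_sq_neg_sq, thetaTerm_sq_neg_mul_sq hp, h_tri,
    zpow_add₀ hp, show a + b + (a - b + 1) = 2 * a + 1 by ring,
    show a + b - (a - b + 1) = 2 * b - 1 by ring, (odd_two_mul_add_one a).neg_one_zpow,
    zpow_add_one₀ hx, zpow_sub_one₀ hy]
  ring

lemma thetaTerm_mul_add (hp : p ≠ 0) (hx : x ≠ 0) (n r : ℕ) (m : ℤ) :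
    thetaTerm p x (m * n + r) = thetaTerm p x r *
      thetaTerm (p ^ n ^ 2) (-((-x) ^ n * p ^ (n.choose 2 + n * r))) m := by
  have h_tri : tri (m * n + r) =
      tri r + ((n.choose 2 + n * r : ℕ) * m + (n ^ 2 : ℕ) * tri m) := by
    have h_sum := two_mul_tri (m * n + r)
    have h_r := two_mul_tri r
    have h_n := two_mul_tri n
    have h_m := two_mul_tri m
    push_cast
    rw [← tri_natCast]
    refine mul_left_cancel₀ two_ne_zero ?_
    linear_combination h_sum - h_r - m * h_n - n ^ 2 * h_m
  rw [thetaTerm, thetaTerm, thetaTerm, h_tri, neg_neg, mul_zpow, zpow_add₀ hp, zpow_add₀ hp,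
    zpow_add₀ (neg_ne_zero.2 hx), zpow_mul p, zpow_mul p, zpow_natCast p, zpow_natCast p,
    mul_comm m, zpow_mul, zpow_natCast]
  ring

variable [CompleteSpace 𝕜]

lemma hasSum_thetaTerm_mul_thetaTerm (hp1 : ‖p‖ < 1) (hp : p ≠ 0) (hx : x ≠ 0) (hy : y ≠ 0) :
    HasSum (fun c : ℤ × ℤ ↦ thetaTerm p x c.1 * thetaTerm p y c.2)
      (thetaProd p x * thetaProd p y) :=
  (hasSum_thetaTerm hp1 hp hx).mul (hasSum_thetaTerm hp1 hp hy)
    (summable_mul_of_summable_norm (summable_norm_thetaTerm hp1 hp hx)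
      (summable_norm_thetaTerm hp1 hp hy))

theorem thetaProd_mul_thetaProd (hp1 : ‖p‖ < 1) (hp : p ≠ 0) (hx : x ≠ 0) (hy : y ≠ 0) :
    thetaProd p (x * y) * thetaProd p (x / y) =
      thetaProd (p ^ 2) (-x ^ 2) * thetaProd (p ^ 2) (-(p * y ^ 2)) -
        x / y * (thetaProd (p ^ 2) (-(p * x ^ 2)) * thetaProd (p ^ 2) (-y ^ 2)) := by
  have hp2 : ‖p ^ 2‖ < 1 := norm_pow_lt_one_of_ne_zero hp1 two_ne_zero
  have hp0 : p ^ 2 ≠ 0 := pow_ne_zero 2 hp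
  have h_all := parityEquiv.hasSum_iff.2
    (hasSum_thetaTerm_mul_thetaTerm hp1 hp (mul_ne_zero hx hy) (div_ne_zero hx hy))
  have h_even := hasSum_thetaTerm_mul_thetaTerm hp2 hp0 (x := -x ^ 2) (y := -(p * y ^ 2))
    (by simp [hx]) (by simp [hp, hy])
  have h_odd := (hasSum_thetaTerm_mul_thetaTerm hp2 hp0 (x := -(p * x ^ 2)) (y := -y ^ 2)
    (by simp [hp, hx]) (by simp [hy])).mul_left (-(x / y))
  simp only [← thetaTerm_mul_thetaTerm_even hp hx hy] at h_even
  simp only [← thetaTerm_mul_thetaTerm_odd hp hx hy] at h_odd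
  linear_combination h_all.unique (HasSum.sum h_even h_odd)

/- With `D x y := θ(xy) θ(x/y) / x`, the product formula says `D x y = g x * e y - e x * g y`, so
this is the Plücker relation between `2 × 2` minors. -/
theorem thetaProd_three_term (hp1 : ‖p‖ < 1) (hp : p ≠ 0) (hx : x ≠ 0) (hy : y ≠ 0)
    (hz : z ≠ 0) (hw : w ≠ 0) :
    y * (thetaProd p (x * y) * thetaProd p (x / y)) * (thetaProd p (z * w) * thetaProd p (z / w)) -
      z * (thetaProd p (x * z) * thetaProd p (x / z)) *
        (thetaProd p (y * w) * thetaProd p (y / w)) +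
      z * (thetaProd p (x * w) * thetaProd p (x / w)) *
        (thetaProd p (y * z) * thetaProd p (y / z)) = 0 := by
  rw [thetaProd_mul_thetaProd hp1 hp hx hy, thetaProd_mul_thetaProd hp1 hp hz hw,
    thetaProd_mul_thetaProd hp1 hp hx hz, thetaProd_mul_thetaProd hp1 hp hy hw,
    thetaProd_mul_thetaProd hp1 hp hx hw, thetaProd_mul_thetaProd hp1 hp hy hz]
  field_simp
  ring

theorem thetaProd_eq_sum_dissection (hp1 : ‖p‖ < 1) (hp : p ≠ 0) (hx : x ≠ 0) (n : ℕ) [NeZero n] :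
    thetaProd p x = ∑ r : Fin n, thetaTerm p x r *
      thetaProd (p ^ n ^ 2) (-((-x) ^ n * p ^ (n.choose 2 + n * r))) := by
  have h_pairs := ((Equiv.prodComm (Fin n) ℤ).trans (Int.divModEquiv n).symm).hasSum_iff.2
    (hasSum_thetaTerm hp1 hp hx)
  have h_fiber (r : Fin n) : HasSum
      (fun m : ℤ ↦
        (thetaTerm p x ∘ (Equiv.prodComm (Fin n) ℤ).trans (Int.divModEquiv n).symm) (r, m))
      (thetaTerm p x r * thetaProd (p ^ n ^ 2) (-((-x) ^ n * p ^ (n.choose 2 + n * r)))) := by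
    have h := (hasSum_thetaTerm (norm_pow_lt_one_of_ne_zero hp1 (pow_ne_zero 2 (NeZero.ne n)))
      (pow_ne_zero _ hp) (x := -((-x) ^ n * p ^ (n.choose 2 + n * r)))
      (by simp [hx, hp])).mul_left (thetaTerm p x r)
    simp only [← thetaTerm_mul_add hp hx] at h
    exact h
  rw [← (h_pairs.prod_fiberwise h_fiber).tsum_eq, tsum_fintype]

lemma thetaProd_sq_self_three_dissection (hq : ‖q‖ < 1) (h0 : q ≠ 0) :
    thetaProd (q ^ 2) q = thetaProd (q ^ 18) (q ^ 9) - 2 * q * thetaProd (q ^ 18) (q ^ 3) := by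
  have h18 : ‖q ^ 18‖ < 1 := norm_pow_lt_one_of_ne_zero hq (by norm_num)
  have h_one : thetaProd (q ^ 18) (q ^ 15) = thetaProd (q ^ 18) (q ^ 3) := by
    rw [← thetaProd_div (pow_ne_zero 18 h0) (q ^ 3)]
    congr 1
    field_simp
  have h_two : thetaProd (q ^ 18) (q ^ 21) = -thetaProd (q ^ 18) (q ^ 3) / q ^ 3 := by
    rw [← thetaProd_inv (pow_ne_zero 3 h0) h18, ← thetaProd_div (pow_ne_zero 18 h0)]
    congr 1
    field_simp
  have h_sum : thetaProd (q ^ 2) q = thetaProd (q ^ 18) (q ^ 9) -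
      q * thetaProd (q ^ 18) (q ^ 15) + q ^ 4 * thetaProd (q ^ 18) (q ^ 21) := by
    have h := thetaProd_eq_sum_dissection (norm_pow_lt_one_of_ne_zero hq two_ne_zero)
      (pow_ne_zero 2 h0) h0 3
    simp only [Fin.sum_univ_three, thetaTerm, tri_natCast, zpow_natCast] at h
    norm_num [← pow_mul, ← pow_add, ← pow_succ, Nat.choose, neg_pow q 3] at h
    rw [h, sub_eq_add_neg]
  rw [h_sum, h_one, h_two]
  field_simp
  ring

lemma thetaProd_cube_neg_pow_four_sub (hq : ‖q‖ < 1) (h0 : q ≠ 0) :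
    thetaProd (q ^ 3) (-q) ^ 4 - thetaProd (q ^ 3) q ^ 4 =
      q * thetaProd (q ^ 3) (-q) * thetaProd (q ^ 3) (-1) ^ 3 := by
  have hp1 : ‖q ^ 3‖ < 1 := norm_pow_lt_one_of_ne_zero hq three_ne_zero
  have hp : q ^ 3 ≠ 0 := pow_ne_zero 3 h0
  have h_sq : thetaProd (q ^ 3) (q * -q) = thetaProd (q ^ 3) (-q) := by
    rw [← thetaProd_div hp (-q)]
    congr 1
    field_simp
  have h := thetaProd_three_term hp1 hp (neg_ne_zero.2 one_ne_zero) h0 (neg_ne_zero.2 h0)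
    one_ne_zero
  rw [neg_one_mul, neg_one_mul, neg_neg, mul_one, mul_one, mul_one, div_one, div_one, div_one,
    h_sq, show -1 / q = (-q)⁻¹ by field_simp, show -1 / -q = q⁻¹ by field_simp,
    show q / -q = -1 by field_simp, thetaProd_inv h0 hp1, thetaProd_inv (neg_ne_zero.2 h0) hp1] at h
  field_simp at h
  linear_combination h

end ThetaIdentities

/-- The eta quotient `η(2τ) η(3τ)² / (η(τ)² η(6τ))`, of weight `0`; it is a fourth root of
`1 + 8 * V1 q`. -/
noncomputable def thetaRatio (q : ℝ) : ℝ :=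
  eulerProd (q ^ 2) * eulerProd (q ^ 3) ^ 2 / (eulerProd q ^ 2 * eulerProd (q ^ 6))

lemma thetaRatio_pos {q : ℝ} (hq : ‖q‖ < 1) : 0 < thetaRatio q := by
  have h1 := eulerProd_pos hq
  have h2 := eulerProd_pow_pos hq two_ne_zero
  have h3 := eulerProd_pow_pos hq three_ne_zero
  have h6 := eulerProd_pow_pos hq (n := 6) (by norm_num)
  unfold thetaRatio
  positivity

lemma one_add_eight_mul_V1 {q : ℝ} (hq : ‖q‖ < 1) (h0 : q ≠ 0) :
    1 + 8 * V1 q = thetaRatio q ^ 4 := by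
  have h1 := eulerProd_ne_zero hq
  have h3 := eulerProd_pow_ne_zero hq three_ne_zero
  have h6 := eulerProd_pow_ne_zero hq (n := 6) (by norm_num)
  have h := thetaProd_cube_neg_pow_four_sub hq h0
  rw [thetaProd_cube_self hq h0, thetaProd_cube_neg hq h0,
    thetaProd_neg_one (norm_pow_lt_one_of_ne_zero hq three_ne_zero),
    show (q ^ 3) ^ 2 = q ^ 6 by ring] at h
  rw [V1_eq_eulerProd hq, thetaRatio]
  field_simp at h ⊢
  linear_combination -h

/-! ### Lambert series -/

lemma hasDerivAt_tprod {ι : Type*} {s : Set ℂ} (hs : IsOpen s) {x : ℂ} (hx : x ∈ s)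
    {f : ι → ℂ → ℂ} (hf : ∀ i, f i x ≠ 0) (hd : ∀ i, DifferentiableOn ℂ (f i) s)
    (hsum : Summable fun i ↦ logDeriv (f i) x) (hmul : MultipliableLocallyUniformlyOn f s)
    (hne : ∏' i, f i x ≠ 0) :
    HasDerivAt (∏' i, f i ·) ((∏' i, f i x) * ∑' i, logDeriv (f i) x) x := by
  have hdiff : DifferentiableAt ℂ (∏' i, f i ·) x :=
    (TendstoLocallyUniformlyOn.differentiableOn hmul.hasProdLocallyUniformlyOn
      (.of_forall fun t ↦ by fun_prop) hs).differentiableAt (hs.mem_nhds hx)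
  rw [← logDeriv_tprod_eq_tsum hs hx hf hd hsum hmul hne, logDeriv_apply, mul_div_cancel₀ _ hne]
  exact hdiff.hasDerivAt

/-- The entire function `e ↦ ∏ (1 - e c_k)`. For `c_k = x p ^ k / (1 - x p ^ k) ^ 2` it measures
how a `q`-Pochhammer symbol changes when its argument is perturbed; see
`qPochhammer_mul_mul_qPochhammer_div`. -/
noncomputable def fredholmProd {𝕜 : Type*} [NormedField 𝕜] (c : ℕ → 𝕜) (e : 𝕜) : 𝕜 :=
  ∏' k, (1 - e * c k)

lemma fredholmProd_zero {𝕜 : Type*} [NormedField 𝕜] (c : ℕ → 𝕜) : fredholmProd c 0 = 1 := by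
  simp [fredholmProd]

lemma hasProd_fredholmProd {c : ℕ → ℝ} (hc : Summable c) (e : ℝ) :
    HasProd (fun k ↦ 1 - e * c k) (fredholmProd c e) := by
  have h := Real.multipliable_one_add_of_summable (hc.mul_left e).neg
  simpa only [fredholmProd, ← sub_eq_add_neg] using h.hasProd

lemma hasDerivAt_fredholmProd_zero_complex {c : ℕ → ℂ} (hc : Summable c) :
    HasDerivAt (fredholmProd c) (-∑' k, c k) 0 := by
  have hlog (k : ℕ) : logDeriv (fun z ↦ 1 - z * c k) 0 = -c k := by
    simp [logDeriv_apply]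
  have hmul : MultipliableLocallyUniformlyOn (fun k z ↦ 1 - z * c k) (Metric.ball 0 1) := by
    simp only [sub_eq_add_neg]
    refine hc.norm.multipliableLocallyUniformlyOn_nat_one_add Metric.isOpen_ball
      (.of_forall fun k z hz ↦ ?_) fun k ↦ by fun_prop
    rw [norm_neg, norm_mul]
    exact mul_le_of_le_one_left (norm_nonneg _) (mem_ball_zero_iff.1 hz).le
  have h := hasDerivAt_tprod Metric.isOpen_ball (Metric.mem_ball_self one_pos)
    (fun k ↦ by simp) (fun k ↦ by fun_prop) (by simpa only [hlog] using hc.neg) hmul (by simp)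
  simp only [hlog, tsum_neg, zero_mul, sub_zero, tprod_one, one_mul] at h
  exact h

lemma hasDerivAt_fredholmProd_zero {c : ℕ → ℝ} (hc : Summable c) :
    HasDerivAt (fredholmProd c) (-∑' k, c k) 0 := by
  have h := (hasDerivAt_fredholmProd_zero_complex
    (Complex.hasSum_ofReal.2 hc.hasSum).summable).real_of_complex (z := 0)
  rw [← Complex.ofReal_tsum, ← Complex.ofReal_neg, Complex.ofReal_re] at h
  convert h using 2 with e
  have hcast := (hasProd_fredholmProd hc e).multipliable.map_tprod Complex.ofRealHom
    Complex.continuous_ofReal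
  rw [← Complex.ofReal_re (fredholmProd c e), fredholmProd, fredholmProd]
  exact congrArg Complex.re (hcast.trans (by simp))

/-- The summand of the Lambert series: `u / (1 - u) ^ 2 = ∑ n uⁿ` for `|u| < 1`. -/
noncomputable def lambertTerm (u : ℝ) : ℝ := u / (1 - u) ^ 2

/-- The Lambert series `∑_{k ≥ 0} x p ^ k / (1 - x p ^ k) ^ 2`. -/
noncomputable def lambertSeries (x p : ℝ) : ℝ := ∑' k : ℕ, lambertTerm (x * p ^ k)

/-- The symmetrized Lambert series attached to `thetaProd p x`; up to a constant, the
Weierstrass function `℘(log x)` for the lattice of periods of `thetaProd p ∘ exp`. -/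
noncomputable def thetaLambert (p x : ℝ) : ℝ := lambertSeries x p + lambertSeries (p / x) p

section Lambert

variable {p q x y z : ℝ}

lemma summable_lambertTerm (x : ℝ) (hp : ‖p‖ < 1) :
    Summable fun k : ℕ ↦ lambertTerm (x * p ^ k) := by
  have hgeom : Summable fun k : ℕ ↦ x * p ^ k := (summable_geometric_of_norm_lt_one hp).mul_left x
  have hbdd : Tendsto (fun k : ℕ ↦ ((1 - x * p ^ k) ^ 2)⁻¹) atTop (𝓝 (((1 - 0) ^ 2)⁻¹)) :=
    ((hgeom.tendsto_atTop_zero.const_sub 1).pow 2).inv₀ (by norm_num)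
  refine summable_of_isBigO_nat hgeom ?_
  simpa [lambertTerm, div_eq_mul_inv] using
    (Asymptotics.isBigO_refl (fun k : ℕ ↦ x * p ^ k) atTop).mul (hbdd.isBigO_one ℝ)

lemma one_sub_mul_pow_ne_zero_of_qPochhammer_ne_zero (h : qPochhammer x p ≠ 0) (k : ℕ) :
    1 - x * p ^ k ≠ 0 :=
  fun hk ↦ h (tprod_of_exists_eq_zero ⟨k, hk⟩)

lemma qPochhammer_mul_mul_qPochhammer_div (hp : ‖p‖ < 1) (hx : qPochhammer x p ≠ 0)
    (hz : z ≠ 0) :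
    qPochhammer (x * z) p * qPochhammer (x / z) p = qPochhammer x p ^ 2 *
      fredholmProd (fun k ↦ lambertTerm (x * p ^ k)) (z + 1 / z - 2) := by
  have hleft := (hasProd_qPochhammer (x * z) hp).mul (hasProd_qPochhammer (x / z) hp)
  have hright := ((hasProd_qPochhammer x hp).mul (hasProd_qPochhammer x hp)).mul
    (hasProd_fredholmProd (summable_lambertTerm x hp) (z + 1 / z - 2))
  rw [pow_two]
  refine hleft.unique ?_
  convert hright using 2 with k
  have := one_sub_mul_pow_ne_zero_of_qPochhammer_ne_zero hx k
  unfold lambertTerm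
  field_simp
  ring

/-- The ratio `θ(xz) θ(x/z) / θ(x)²` as a function of `e = z + 1/z - 2`. -/
noncomputable def thetaShift (p x e : ℝ) : ℝ :=
  fredholmProd (fun k ↦ lambertTerm (x * p ^ k)) e *
    fredholmProd (fun k ↦ lambertTerm (p / x * p ^ k)) e

lemma thetaShift_zero (p x : ℝ) : thetaShift p x 0 = 1 := by
  simp only [thetaShift, fredholmProd_zero, mul_one]

lemma hasDerivAt_thetaShift_zero (x : ℝ) (hp : ‖p‖ < 1) :
    HasDerivAt (thetaShift p x) (-thetaLambert p x) 0 := by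
  have h := (hasDerivAt_fredholmProd_zero (summable_lambertTerm x hp)).mul
    (hasDerivAt_fredholmProd_zero (summable_lambertTerm (p / x) hp))
  simp only [fredholmProd_zero] at h
  refine h.congr_deriv ?_
  unfold thetaLambert lambertSeries
  ring

lemma thetaProd_mul_mul_thetaProd_div (hp : ‖p‖ < 1) (hx : x ≠ 0) (hθ : thetaProd p x ≠ 0)
    (hz : z ≠ 0) :
    thetaProd p (x * z) * thetaProd p (x / z) =
      thetaProd p x ^ 2 * thetaShift p x (z + 1 / z - 2) := by
  unfold thetaProd at hθ ⊢
  have h1 := qPochhammer_mul_mul_qPochhammer_div hp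
    (right_ne_zero_of_mul (left_ne_zero_of_mul hθ)) hz
  have h2 := qPochhammer_mul_mul_qPochhammer_div hp (right_ne_zero_of_mul hθ) hz
  rw [show p / (x * z) = p / x / z by field_simp, show p / (x / z) = p / x * z by field_simp,
    thetaShift]
  linear_combination
    (eulerProd p ^ 2 * (qPochhammer (p / x / z) p * qPochhammer (p / x * z) p)) * h1 +
      eulerProd p ^ 2 * (qPochhammer x p ^ 2 *
        fredholmProd (fun k ↦ lambertTerm (x * p ^ k)) (z + 1 / z - 2)) * h2

lemma thetaProd_sq_eq_mul_fredholmProd_sq (hp : ‖p‖ < 1) (hz : z ≠ 0) :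
    thetaProd p z ^ 2 = z * ((z + 1 / z - 2) * eulerProd p ^ 6 *
      fredholmProd (fun k ↦ lambertTerm (p * p ^ k)) (z + 1 / z - 2) ^ 2) := by
  have hE : qPochhammer p p ≠ 0 := eulerProd_eq_qPochhammer p ▸ eulerProd_ne_zero hp
  have hpair := qPochhammer_mul_mul_qPochhammer_div hp hE hz
  rw [← eulerProd_eq_qPochhammer] at hpair
  have hθ : thetaProd p z =
      eulerProd p * (1 - z) * (qPochhammer (p * z) p * qPochhammer (p / z) p) := by
    rw [thetaProd, qPochhammer_eq_one_sub_mul z hp, mul_comm z p]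
    ring
  rw [hθ, hpair]
  field_simp
  ring

lemma exists_add_one_div_sub_two_eq {e : ℝ} (he : 0 < e) :
    ∃ z : ℝ, z ≠ 0 ∧ z + 1 / z - 2 = e := by
  have hsq := Real.sq_sqrt (show 0 ≤ e + e ^ 2 / 4 by positivity)
  set r := √(e + e ^ 2 / 4)
  have hr : 0 ≤ r := Real.sqrt_nonneg _
  have hz : 1 + e / 2 + r ≠ 0 := by positivity
  refine ⟨_, hz, ?_⟩
  field_simp
  linear_combination 4 * hsq

-- The three-term relation for `(x, y, z, 1)`, written in the variable `e = z + 1/z - 2`.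
lemma thetaShift_sub_thetaShift (hp : ‖p‖ < 1) (hp0 : p ≠ 0) (hx0 : x ≠ 0) (hy0 : y ≠ 0)
    (hx : thetaProd p x ≠ 0) (hy : thetaProd p y ≠ 0) {e : ℝ} (he : 0 < e) :
    thetaShift p x e - thetaShift p y e =
      e * (y * eulerProd p ^ 6 * thetaProd p (x * y) * thetaProd p (x / y) /
        (thetaProd p x ^ 2 * thetaProd p y ^ 2) *
          fredholmProd (fun k ↦ lambertTerm (p * p ^ k)) e ^ 2) := by
  obtain ⟨z, hz, rfl⟩ := exists_add_one_div_sub_two_eq he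
  have hthree := thetaProd_three_term hp hp0 hx0 hy0 hz one_ne_zero
  simp only [mul_one, div_one] at hthree
  rw [thetaProd_mul_mul_thetaProd_div hp hx0 hx hz, thetaProd_mul_mul_thetaProd_div hp hy0 hy hz,
    ← pow_two, ← pow_two, ← pow_two, thetaProd_sq_eq_mul_fredholmProd_sq hp hz] at hthree
  field_simp at hthree ⊢
  linear_combination -hthree

theorem thetaLambert_sub_thetaLambert (hp : ‖p‖ < 1) (hp0 : p ≠ 0) (hx0 : x ≠ 0) (hy0 : y ≠ 0)
    (hx : thetaProd p x ≠ 0) (hy : thetaProd p y ≠ 0) :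
    thetaLambert p y - thetaLambert p x =
      y * eulerProd p ^ 6 * thetaProd p (x * y) * thetaProd p (x / y) /
        (thetaProd p x ^ 2 * thetaProd p y ^ 2) := by
  set K := y * eulerProd p ^ 6 * thetaProd p (x * y) * thetaProd p (x / y) /
    (thetaProd p x ^ 2 * thetaProd p y ^ 2)
  set φ := fredholmProd fun k ↦ lambertTerm (p * p ^ k)
  have hslope : Tendsto (fun e : ℝ ↦ e⁻¹ * (thetaShift p x e - thetaShift p y e)) (𝓝[>] 0)
      (𝓝 (-thetaLambert p x - -thetaLambert p y)) := by
    refine ((hasDerivAt_thetaShift_zero x hp).sub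
      (hasDerivAt_thetaShift_zero y hp)).tendsto_slope_zero_right.congr fun e ↦ ?_
    simp [thetaShift_zero]
  have hφ : Tendsto (fun e ↦ K * φ e ^ 2) (𝓝[>] 0) (𝓝 K) := by
    have hcont : Tendsto φ (𝓝 0) (𝓝 (φ 0)) :=
      (hasDerivAt_fredholmProd_zero (summable_lambertTerm p hp)).continuousAt
    rw [show φ 0 = 1 from fredholmProd_zero _] at hcont
    simpa using ((hcont.pow 2).const_mul K).mono_left nhdsWithin_le_nhds
  have hcongr : (fun e : ℝ ↦ e⁻¹ * (thetaShift p x e - thetaShift p y e)) =ᶠ[𝓝[>] 0]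
      fun e ↦ K * φ e ^ 2 := by
    filter_upwards [self_mem_nhdsWithin] with e (he : 0 < e)
    rw [thetaShift_sub_thetaShift hp hp0 hx0 hy0 hx hy he, inv_mul_cancel_left₀ he.ne']
  linarith [tendsto_nhds_unique (hslope.congr' hcongr) hφ]

/-- `∑_{n ≥ 1} σ₁(n) qⁿ`, in the form `∑_{m ≥ 1} q ^ m / (1 - q ^ m) ^ 2`. -/
noncomputable def sigmaSeries (q : ℝ) : ℝ := lambertSeries q q

lemma lambertTerm_neg (hx : ‖x‖ < 1) :
    lambertTerm (-x) = 4 * lambertTerm (x ^ 2) - lambertTerm x := by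
  have hsub : 1 - x ≠ 0 := one_sub_ne_zero_of_norm_lt_one hx
  have hadd : 1 + x ≠ 0 := by
    simpa using one_sub_ne_zero_of_norm_lt_one (x := -x) (by rwa [norm_neg])
  unfold lambertTerm
  rw [show 1 - x ^ 2 = (1 - x) * (1 + x) by ring, sub_neg_eq_add]
  field_simp
  ring

lemma lambertSeries_neg (hx : ‖x‖ < 1) (hp : ‖p‖ < 1) :
    lambertSeries (-x) p = 4 * lambertSeries (x ^ 2) (p ^ 2) - lambertSeries x p := by
  have hsum := summable_lambertTerm (x ^ 2) (norm_pow_lt_one_of_ne_zero hp two_ne_zero)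
  unfold lambertSeries
  rw [← tsum_mul_left, ← (hsum.mul_left 4).tsum_sub (summable_lambertTerm x hp)]
  refine tsum_congr fun k ↦ ?_
  rw [neg_mul, lambertTerm_neg (norm_mul_pow_lt_one hx hp k), mul_pow, pow_right_comm]

lemma lambertSeries_eq_add (x : ℝ) (hp : ‖p‖ < 1) :
    lambertSeries x p = lambertTerm x + lambertSeries (x * p) p := by
  unfold lambertSeries
  rw [(summable_lambertTerm x hp).tsum_eq_zero_add, pow_zero, mul_one]
  simp only [mul_assoc, pow_succ']

lemma lambertSeries_eq_sum_residues (x : ℝ) (hp : ‖p‖ < 1) (n : ℕ) [NeZero n] :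
    lambertSeries x p = ∑ j : ZMod n, lambertSeries (x * p ^ j.val) (p ^ n) := by
  unfold lambertSeries
  rw [Nat.sumByResidueClasses (summable_lambertTerm x hp) n]
  simp only [pow_add, pow_mul, mul_assoc]

lemma thetaLambert_cube_self (hq : ‖q‖ < 1) (h0 : q ≠ 0) :
    thetaLambert (q ^ 3) q = sigmaSeries q - sigmaSeries (q ^ 3) := by
  have hsplit : sigmaSeries q = lambertSeries q (q ^ 3) + lambertSeries (q ^ 2) (q ^ 3) +
      sigmaSeries (q ^ 3) := by
    rw [sigmaSeries, lambertSeries_eq_sum_residues q hq 3]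
    exact (Fin.sum_univ_three _).trans (by simp [ZMod.val, sigmaSeries, ← pow_succ', ← sq])
  rw [hsplit, thetaLambert, show q ^ 3 / q = q ^ 2 by field_simp]
  ring

lemma thetaLambert_cube_neg (hq : ‖q‖ < 1) (h0 : q ≠ 0) :
    thetaLambert (q ^ 3) (-q) =
      4 * (sigmaSeries (q ^ 2) - sigmaSeries (q ^ 6)) - (sigmaSeries q - sigmaSeries (q ^ 3)) := by
  have hp := norm_pow_lt_one_of_ne_zero hq three_ne_zero
  have h2 := norm_pow_lt_one_of_ne_zero hq two_ne_zero
  have hsq := thetaLambert_cube_self h2 (pow_ne_zero 2 h0)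
  rw [thetaLambert, show (q ^ 2) ^ 3 / q ^ 2 = (q ^ 2) ^ 2 by field_simp,
    show (q ^ 2) ^ 3 = q ^ 6 by ring] at hsq
  rw [← thetaLambert_cube_self hq h0, ← hsq, thetaLambert, thetaLambert,
    show q ^ 3 / -q = -q ^ 2 by field_simp, show q ^ 3 / q = q ^ 2 by field_simp,
    lambertSeries_neg hq hp, lambertSeries_neg h2 hp, show (q ^ 3) ^ 2 = q ^ 6 by ring]
  ring

lemma thetaLambert_neg_one (hp : ‖p‖ < 1) :
    thetaLambert p (-1) = -1 / 4 + 2 * (4 * sigmaSeries (p ^ 2) - sigmaSeries p) := by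
  rw [thetaLambert, lambertSeries_eq_add (-1) hp, neg_one_mul, div_neg, div_one,
    lambertSeries_neg hp hp, sigmaSeries, sigmaSeries,
    show lambertTerm (-1) = -1 / 4 by norm_num [lambertTerm]]
  ring

lemma thetaProd_cube_self_ne_zero (hq : ‖q‖ < 1) (h0 : q ≠ 0) : thetaProd (q ^ 3) q ≠ 0 := by
  rw [thetaProd_cube_self hq h0]
  exact eulerProd_ne_zero hq

lemma eulerProd_quotient_eq_of_thetaLambert_neg_one (hq : ‖q‖ < 1) (h0 : q ≠ 0) :
    eulerProd (q ^ 2) ^ 2 * eulerProd (q ^ 3) ^ 12 / (eulerProd q ^ 4 * eulerProd (q ^ 6) ^ 6) =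
      1 + 4 * sigmaSeries q + 4 * sigmaSeries (q ^ 3) - 32 * sigmaSeries (q ^ 6) := by
  have h1 := eulerProd_pos hq
  have h3 := eulerProd_pow_pos hq three_ne_zero
  have h6 := eulerProd_pow_pos hq (n := 6) (by norm_num)
  have hp := norm_pow_lt_one_of_ne_zero hq three_ne_zero
  have hone : thetaProd (q ^ 3) (-1) = 2 * eulerProd (q ^ 6) ^ 2 / eulerProd (q ^ 3) := by
    rw [thetaProd_neg_one hp, show (q ^ 3) ^ 2 = q ^ 6 by ring]
  have h := thetaLambert_sub_thetaLambert hp (pow_ne_zero 3 h0) (neg_ne_zero.2 one_ne_zero) h0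
    (by rw [hone]; positivity) (thetaProd_cube_self_ne_zero hq h0)
  rw [neg_one_mul, show -1 / q = (-q)⁻¹ by field_simp, thetaProd_inv (neg_ne_zero.2 h0) hp,
    thetaLambert_cube_self hq h0, thetaLambert_neg_one hp, hone, thetaProd_cube_self hq h0,
    thetaProd_cube_neg hq h0, show (q ^ 3) ^ 2 = q ^ 6 by ring] at h
  field_simp at h ⊢
  linear_combination -h / 4

lemma eulerProd_quotient_eq_of_thetaLambert_neg (hq : ‖q‖ < 1) (h0 : q ≠ 0) :
    q * eulerProd (q ^ 3) ^ 3 * eulerProd (q ^ 6) ^ 3 / (eulerProd q * eulerProd (q ^ 2)) =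
      sigmaSeries q - 2 * sigmaSeries (q ^ 2) - sigmaSeries (q ^ 3) + 2 * sigmaSeries (q ^ 6) := by
  have h1 := eulerProd_pos hq
  have h2 := eulerProd_pow_pos hq two_ne_zero
  have h3 := eulerProd_pow_pos hq three_ne_zero
  have h6 := eulerProd_pow_pos hq (n := 6) (by norm_num)
  have hp := norm_pow_lt_one_of_ne_zero hq three_ne_zero
  have hp0 := pow_ne_zero 3 h0
  have hneg : thetaProd (q ^ 3) (-q) ≠ 0 := by
    rw [thetaProd_cube_neg hq h0]
    positivity
  have h := thetaLambert_sub_thetaLambert hp hp0 (neg_ne_zero.2 h0) h0 hneg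
    (thetaProd_cube_self_ne_zero hq h0)
  rw [show -q * q = q ^ 3 / -q by field_simp, thetaProd_div hp0, show -q / q = -1 by field_simp,
    thetaLambert_cube_self hq h0, thetaLambert_cube_neg hq h0, thetaProd_cube_self hq h0,
    thetaProd_cube_neg hq h0, thetaProd_neg_one hp, show (q ^ 3) ^ 2 = q ^ 6 by ring] at h
  field_simp at h ⊢
  linear_combination -h / 2

end Lambert

/-! ### Modular inversion -/

/-- The nome `e^{2πiτ}` at the point `τ = it` of the imaginary axis. -/
noncomputable def nome (t : ℝ) : ℝ := exp (-2 * π * t)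

/-- The Dedekind eta function `η(it)` on the imaginary axis, as a real function. -/
noncomputable def etaImag (t : ℝ) : ℝ := exp (-2 * π * t / 24) * eulerProd (nome t)

section Modular

variable {t : ℝ}

lemma nome_pos (t : ℝ) : 0 < nome t := exp_pos _

lemma norm_nome_lt_one (ht : 0 < t) : ‖nome t‖ < 1 := by
  rw [Real.norm_of_nonneg (nome_pos t).le, nome, exp_lt_one_iff]
  linarith [mul_pos (mul_pos two_pos pi_pos) ht]

lemma nome_pow (t : ℝ) (n : ℕ) : nome t ^ n = nome (n * t) := by
  rw [nome, nome, ← exp_nat_mul]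
  congr 1
  ring

lemma exists_eq_nome {q : ℝ} (h0 : 0 < q) (h1 : q < 1) : ∃ t, 0 < t ∧ q = nome t := by
  refine ⟨-log q / (2 * π), div_pos (by linarith [log_neg h0 h1]) (by positivity), ?_⟩
  rw [nome, show -2 * π * (-log q / (2 * π)) = log q by field_simp, exp_log h0]

lemma etaImag_pos (ht : 0 < t) : 0 < etaImag t :=
  mul_pos (exp_pos _) (eulerProd_pos (norm_nome_lt_one ht))

lemma ofReal_eulerProd {q : ℝ} (hq : ‖q‖ < 1) :
    ((eulerProd q : ℝ) : ℂ) = eulerProd (q : ℂ) := by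
  have h := (hasProd_eulerProd hq).multipliable.map_tprod Complex.ofRealHom
    Complex.continuous_ofReal
  exact h.trans (by simp [eulerProd])

lemma eta_I_mul_eq_etaImag (ht : 0 < t) : ModularForm.eta (Complex.I * t) = etaImag t := by
  have hprefactor :
      Function.Periodic.qParam 24 (Complex.I * t) = ((exp (-2 * π * t / 24) : ℝ) : ℂ) := by
    rw [Function.Periodic.qParam]
    push_cast
    congr 1
    linear_combination (2 * (π : ℂ) * t / 24) * Complex.I_sq
  have hnome : Complex.exp (2 * π * Complex.I * (Complex.I * t)) = nome t := by
    rw [nome]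
    push_cast
    congr 1
    linear_combination (2 * (π : ℂ) * t) * Complex.I_sq
  rw [ModularForm.eta, etaImag, Complex.ofReal_mul, ofReal_eulerProd (norm_nome_lt_one ht),
    hprefactor]
  simp only [ModularForm.eta_q_eq_pow, hnome, eulerProd]

lemma norm_sqrt_sq (z : ℂ) : ‖Complex.sqrt z‖ ^ 2 = ‖z‖ := by
  rw [← norm_pow, Complex.sqrt, Complex.cpow_ofNat_inv_pow]

lemma etaImag_one_div (ht : 0 < t) : etaImag (1 / t) = √t * etaImag t := by
  have ht' : 0 < 1 / t := by positivity
  have hη := ModularForm.eta_comp_eq_csqrt_I_inv (x := Complex.I * t)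
    (by simp [UpperHalfPlane.upperHalfPlaneSet, ht])
  have hpoint : (-1 : ℂ) / (Complex.I * t) = Complex.I * ((1 / t : ℝ) : ℂ) := by
    have : (t : ℂ) ≠ 0 := by exact_mod_cast ht.ne'
    push_cast
    field_simp
    linear_combination -Complex.I_sq
  simp only [Function.comp_apply, Pi.smul_apply, Pi.mul_apply, smul_eq_mul] at hη
  rw [hpoint, eta_I_mul_eq_etaImag ht', eta_I_mul_eq_etaImag ht] at hη
  have hsq := congrArg (fun z : ℂ ↦ ‖z‖ ^ 2) hη
  simp only [norm_mul, norm_inv, mul_pow, inv_pow, norm_sqrt_sq, Complex.norm_I,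
    Complex.norm_real, Real.norm_eq_abs, sq_abs, inv_one, one_mul, abs_of_pos ht] at hsq
  refine (pow_left_inj₀ (etaImag_pos ht').le
    (mul_pos (sqrt_pos.2 ht) (etaImag_pos ht)).le two_ne_zero).1 ?_
  rw [hsq, mul_pow, Real.sq_sqrt ht.le]

lemma eulerProd_nome_pow (t : ℝ) (n : ℕ) :
    eulerProd (nome t ^ n) = exp (2 * π * t / 24) ^ n * etaImag (n * t) := by
  rw [nome_pow, etaImag, ← mul_assoc, ← exp_nat_mul, ← exp_add,
    show (n : ℝ) * (2 * π * t / 24) + -2 * π * (n * t) / 24 = 0 by ring, exp_zero, one_mul]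

lemma eulerProd_nome (t : ℝ) : eulerProd (nome t) = exp (2 * π * t / 24) * etaImag t := by
  simpa using eulerProd_nome_pow t 1

lemma V1_nome (ht : 0 < t) :
    V1 (nome t) =
      etaImag (2 * t) * etaImag (6 * t) ^ 5 / (etaImag t ^ 5 * etaImag (3 * t)) := by
  have h1 := etaImag_pos ht
  have h3 := etaImag_pos (show 0 < 3 * t by positivity)
  have hnome : nome t * exp (2 * π * t / 24) ^ 24 = 1 := by
    rw [nome, ← exp_nat_mul, ← exp_add,
      show -2 * π * t + (24 : ℕ) * (2 * π * t / 24) = 0 by push_cast; ring, exp_zero]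
  rw [V1_eq_eulerProd (norm_nome_lt_one ht), eulerProd_nome, eulerProd_nome_pow,
    eulerProd_nome_pow, eulerProd_nome_pow]
  push_cast
  generalize exp (2 * π * t / 24) = x, etaImag (3 * t) = η₃, etaImag (6 * t) = η₆ at *
  field_simp
  linear_combination (etaImag (2 * t) * η₆ ^ 5) * hnome

lemma thetaRatio_nome (ht : 0 < t) :
    thetaRatio (nome t) =
      etaImag (2 * t) * etaImag (3 * t) ^ 2 / (etaImag t ^ 2 * etaImag (6 * t)) := by
  have h1 := etaImag_pos ht
  rw [thetaRatio, eulerProd_nome, eulerProd_nome_pow, eulerProd_nome_pow, eulerProd_nome_pow]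
  push_cast
  field_simp

lemma etaImag_mul_one_div_six_mul (ht : 0 < t) {d d' : ℝ} (hd' : 0 < d') (h : d * d' = 6) :
    etaImag (d * (1 / (6 * t))) = √d' * √t * etaImag (d' * t) := by
  have hinv : d * (1 / (6 * t)) = 1 / (d' * t) := by
    field_simp
    linear_combination h
  rw [hinv, etaImag_one_div (by positivity), Real.sqrt_mul hd'.le]

lemma etaImag_fricke (ht : 0 < t) :
    etaImag (1 / (6 * t)) = √2 * √3 * √t * etaImag (6 * t) ∧
    etaImag (2 * (1 / (6 * t))) = √3 * √t * etaImag (3 * t) ∧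
    etaImag (3 * (1 / (6 * t))) = √2 * √t * etaImag (2 * t) ∧
    etaImag (6 * (1 / (6 * t))) = √t * etaImag t := by
  have h6 : √(6 : ℝ) = √2 * √3 := by rw [← Real.sqrt_mul (by norm_num)]; norm_num
  refine ⟨?_, ?_, ?_, ?_⟩
  · simpa [h6] using etaImag_mul_one_div_six_mul ht (d := 1) (d' := 6) (by norm_num) (by norm_num)
  · exact etaImag_mul_one_div_six_mul ht (by norm_num) (by norm_num)
  · exact etaImag_mul_one_div_six_mul ht (by norm_num) (by norm_num)
  · simpa using etaImag_mul_one_div_six_mul ht (d := 6) (d' := 1) (by norm_num) (by norm_num)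

lemma V1_nome_mul_V1_nome_fricke (ht : 0 < t) :
    V1 (nome t) * V1 (nome (1 / (6 * t))) = 1 / 72 := by
  obtain ⟨hη1, hη2, hη3, hη6⟩ := etaImag_fricke ht
  have h1 := etaImag_pos ht
  have h2 := etaImag_pos (show 0 < 2 * t by positivity)
  have h3 := etaImag_pos (show 0 < 3 * t by positivity)
  have h6 := etaImag_pos (show 0 < 6 * t by positivity)
  rw [V1_nome ht, V1_nome (by positivity), hη1, hη2, hη3, hη6]
  generalize etaImag (3 * t) = η₃, etaImag (6 * t) = η₆ at *
  field_simp
  rw [show √2 ^ 6 = (√2 ^ 2) ^ 3 by ring, show √3 ^ 4 = (√3 ^ 2) ^ 2 by ring,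
    Real.sq_sqrt zero_le_two, Real.sq_sqrt zero_le_three]
  norm_num

lemma thetaRatio_nome_fricke_pow_four (ht : 0 < t) :
    9 * thetaRatio (nome (1 / (6 * t))) ^ 4 =
      etaImag (2 * t) ^ 8 * etaImag (3 * t) ^ 4 / (etaImag t ^ 4 * etaImag (6 * t) ^ 8) := by
  obtain ⟨hη1, hη2, hη3, hη6⟩ := etaImag_fricke ht
  have h1 := etaImag_pos ht
  have h3 := etaImag_pos (show 0 < 3 * t by positivity)
  rw [thetaRatio_nome (by positivity), hη1, hη2, hη3, hη6]
  field_simp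
  rw [show √3 ^ 4 = (√3 ^ 2) ^ 2 by ring, Real.sq_sqrt zero_le_three]
  norm_num

-- The image of `one_add_eight_mul_V1` under the Fricke involution `t ↦ 1 / (6t)`.
lemma one_add_nine_mul_V1 {q : ℝ} (h0 : 0 < q) (h1 : q < 1) :
    1 + 9 * V1 q = eulerProd (q ^ 2) ^ 9 * eulerProd (q ^ 3) ^ 3 /
      (eulerProd q ^ 9 * eulerProd (q ^ 6) ^ 3) := by
  obtain ⟨t, ht, rfl⟩ := exists_eq_nome h0 h1
  have ht' : 0 < 1 / (6 * t) := by positivity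
  have h1 := etaImag_pos ht
  calc 1 + 9 * V1 (nome t) = V1 (nome t) * (9 * (1 + 8 * V1 (nome (1 / (6 * t))))) := by
        linear_combination -72 * V1_nome_mul_V1_nome_fricke ht
    _ = etaImag (2 * t) ^ 9 * etaImag (3 * t) ^ 3 / (etaImag t ^ 9 * etaImag (6 * t) ^ 3) := by
        rw [one_add_eight_mul_V1 (norm_nome_lt_one ht') (nome_pos _).ne',
          thetaRatio_nome_fricke_pow_four ht, V1_nome ht]
        field_simp
    _ = _ := by
        rw [eulerProd_nome, eulerProd_nome_pow, eulerProd_nome_pow, eulerProd_nome_pow]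
        push_cast
        field_simp

end Modular

/-! ### The derivative of `V1` -/

section Derivative

variable {q : ℝ}

lemma hasDerivAt_eulerProd_complex {q : ℂ} (hq : ‖q‖ < 1) :
    HasDerivAt eulerProd
      (-(eulerProd q * ∑' n : ℕ, (n + 1) * q ^ n / (1 - q ^ (n + 1)))) q := by
  have hpow (n : ℕ) : ‖q ^ (n + 1)‖ < 1 := norm_pow_lt_one_of_ne_zero hq n.succ_ne_zero
  have hlog (n : ℕ) : logDeriv (fun z ↦ 1 - z ^ (n + 1)) q =
      -((n + 1) * q ^ n / (1 - q ^ (n + 1))) := by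
    simp [logDeriv_apply, neg_div]
  have hsum : Summable fun n : ℕ ↦ (n + 1) * q ^ n / (1 - q ^ (n + 1)) := by
    have hnum : Summable fun n : ℕ ↦ ‖(n + 1) * q ^ n‖ := by
      simpa only [add_mul, one_mul, pow_one] using
        (summable_norm_pow_mul_geometric_of_norm_lt_one 1 hq).add
          (summable_norm_geometric_of_norm_lt_one hq) |>.of_nonneg_of_le
            (fun _ ↦ norm_nonneg _) fun _ ↦ norm_add_le _ _
    have hden : Tendsto (fun n : ℕ ↦ (1 - q ^ (n + 1))⁻¹) atTop (𝓝 (1 - 0)⁻¹) :=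
      (((tendsto_pow_atTop_nhds_zero_of_norm_lt_one hq).comp
        (tendsto_add_atTop_nat 1)).const_sub 1).inv₀ (by simp)
    simpa only [div_eq_mul_inv] using
      Summable.mul_tendsto_const hnum (Nat.cofinite_eq_atTop ▸ hden)
  have h := hasDerivAt_tprod (f := fun (n : ℕ) z ↦ 1 - z ^ (n + 1)) Metric.isOpen_ball
    (mem_ball_zero_iff.2 hq) (fun n ↦ one_sub_ne_zero_of_norm_lt_one (hpow n)) (fun n ↦ by fun_prop)
    (by simpa only [hlog] using hsum.neg)
    ModularForm.multipliableLocallyUniformlyOn_one_sub_pow (eulerProd_ne_zero hq)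
  simp only [hlog, tsum_neg, mul_neg] at h
  exact h

lemma eventually_norm_lt_one (hq : ‖q‖ < 1) : ∀ᶠ x in 𝓝 q, ‖x‖ < 1 :=
  continuous_norm.continuousAt.eventually_lt_const hq

lemma hasDerivAt_eulerProd (hq : ‖q‖ < 1) :
    HasDerivAt eulerProd
      (-(eulerProd q * ∑' n : ℕ, (n + 1) * q ^ n / (1 - q ^ (n + 1)))) q := by
  have h := (hasDerivAt_eulerProd_complex (q := q) (by simpa using hq)).real_of_complex
  rw [← ofReal_eulerProd hq] at h
  refine (h.congr_of_eventuallyEq ?_).congr_deriv ?_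
  · filter_upwards [eventually_norm_lt_one hq] with x hx
    rw [← ofReal_eulerProd hx, Complex.ofReal_re]
  · exact_mod_cast Complex.ofReal_re _

lemma sigmaSeries_eq_mul_tsum (hq : ‖q‖ < 1) :
    sigmaSeries q = q * ∑' n : ℕ, (n + 1) * q ^ n / (1 - q ^ (n + 1)) := by
  have hrow (m : ℕ) : ∑' n : ℕ+, ((n : ℕ) : ℝ) ^ 1 * q ^ ((m + 1) * (n : ℕ)) =
      lambertTerm (q * q ^ m) := by
    have hpow := norm_pow_lt_one_of_ne_zero hq m.succ_ne_zero
    rw [lambertTerm, ← pow_succ', ← tsum_coe_mul_geometric_of_norm_lt_one hpow,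
      (hasSum_coe_mul_geometric_of_norm_lt_one hpow).summable.tsum_eq_zero_add,
      tsum_pnat_eq_tsum_succ (f := fun n : ℕ ↦ (n : ℝ) ^ 1 * q ^ ((m + 1) * n))]
    simp [pow_mul]
  have hswap := (tsum_prod_pow_eq_tsum_sigma 1 hq).trans
    (tsum_pow_div_one_sub_eq_tsum_sigma hq 1).symm
  rw [tsum_pnat_eq_tsum_succ (f := fun d : ℕ ↦ ∑' n : ℕ+, ((n : ℕ) : ℝ) ^ 1 * q ^ (d * (n : ℕ))),
    tsum_pnat_eq_tsum_succ (f := fun n : ℕ ↦ (n : ℝ) ^ 1 * q ^ n / (1 - q ^ n))] at hswap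
  simp only [hrow] at hswap
  rw [← tsum_mul_left]
  refine hswap.trans (tsum_congr fun n ↦ ?_)
  push_cast
  ring

lemma hasDerivAt_eulerProd_pow (hq : ‖q‖ < 1) (h0 : q ≠ 0) {n : ℕ} (hn : n ≠ 0) :
    HasDerivAt (fun x ↦ eulerProd (x ^ n))
      (-(n * eulerProd (q ^ n) * sigmaSeries (q ^ n) / q)) q := by
  have hpow := norm_pow_lt_one_of_ne_zero hq hn
  refine ((hasDerivAt_eulerProd hpow).comp q (hasDerivAt_pow n q)).congr_deriv ?_
  rw [sigmaSeries_eq_mul_tsum hpow, ← pow_sub_one_mul hn q]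
  field_simp

lemma continuousAt_eulerProd_pow (hq : ‖q‖ < 1) {n : ℕ} (hn : n ≠ 0) :
    ContinuousAt (fun x ↦ eulerProd (x ^ n)) q :=
  ContinuousAt.comp (g := eulerProd) (f := fun x ↦ x ^ n)
    (hasDerivAt_eulerProd (norm_pow_lt_one_of_ne_zero hq hn)).continuousAt
    (continuous_pow n).continuousAt

lemma V1_eventuallyEq_eulerProd (hq : ‖q‖ < 1) :
    V1 =ᶠ[𝓝 q] fun x ↦ x * (eulerProd (x ^ 2) * eulerProd (x ^ 6) ^ 5 /
      (eulerProd x ^ 5 * eulerProd (x ^ 3))) := by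
  filter_upwards [eventually_norm_lt_one hq] with x hx using V1_eq_eulerProd hx

lemma hasDerivAt_V1_sigmaSeries (hq : ‖q‖ < 1) (h0 : q ≠ 0) :
    HasDerivAt V1 (V1 q / q * (1 + 5 * sigmaSeries q - 2 * sigmaSeries (q ^ 2) +
      3 * sigmaSeries (q ^ 3) - 30 * sigmaSeries (q ^ 6))) q := by
  have h1 := eulerProd_ne_zero hq
  have h3 := eulerProd_pow_ne_zero hq three_ne_zero
  have hd1 : HasDerivAt eulerProd (-(eulerProd q * sigmaSeries q / q)) q := by
    simpa using hasDerivAt_eulerProd_pow hq h0 one_ne_zero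
  have hd2 := hasDerivAt_eulerProd_pow hq h0 two_ne_zero
  have hd3 := hasDerivAt_eulerProd_pow hq h0 three_ne_zero
  have hd6 := hasDerivAt_eulerProd_pow hq h0 (n := 6) (by norm_num)
  have hd := (hasDerivAt_id' q).fun_mul ((hd2.fun_mul (hd6.fun_pow 5)).fun_div
    ((hd1.fun_pow 5).fun_mul hd3) (mul_ne_zero (pow_ne_zero 5 h1) h3))
  refine (hd.congr_of_eventuallyEq (V1_eventuallyEq_eulerProd hq)).congr_deriv ?_
  rw [V1_eq_eulerProd hq]
  push_cast
  field_simp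
  ring

-- Both sides are multiplied by `1 + 9 * V1 q = (1 + 8 * V1 q) + V1 q`; the two Lambert series
-- then account for the two summands.
lemma eulerProd_quotient_eq_sigmaSeries (h0 : 0 < q) (h1 : q < 1) :
    eulerProd (q ^ 2) ^ 7 * eulerProd (q ^ 3) ^ 7 / (eulerProd q ^ 5 * eulerProd (q ^ 6) ^ 5) =
      1 + 5 * sigmaSeries q - 2 * sigmaSeries (q ^ 2) + 3 * sigmaSeries (q ^ 3) -
        30 * sigmaSeries (q ^ 6) := by
  have hq : ‖q‖ < 1 := by rwa [Real.norm_of_nonneg h0.le]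
  have hσ1 := eulerProd_quotient_eq_of_thetaLambert_neg_one hq h0.ne'
  have hσ2 := eulerProd_quotient_eq_of_thetaLambert_neg hq h0.ne'
  have h8 := one_add_eight_mul_V1 hq h0.ne'
  have h9 := one_add_nine_mul_V1 h0 h1
  have hV := V1_eq_eulerProd hq
  have e1 := eulerProd_pos hq
  have e2 := eulerProd_pow_pos hq two_ne_zero
  have e3 := eulerProd_pow_pos hq three_ne_zero
  have e6 := eulerProd_pow_pos hq (n := 6) (by norm_num)
  rw [thetaRatio] at h8
  generalize eulerProd q = e₁ at *
  generalize eulerProd (q ^ 2) = e₂ at *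
  generalize eulerProd (q ^ 3) = e₃ at *
  generalize eulerProd (q ^ 6) = e₆ at *
  have hfst : e₂ ^ 2 * e₃ ^ 12 / (e₁ ^ 4 * e₆ ^ 6) * (1 + 9 * V1 q) =
      e₂ ^ 7 * e₃ ^ 7 / (e₁ ^ 5 * e₆ ^ 5) * (1 + 8 * V1 q) := by
    rw [h9, h8]
    field_simp
  have hsnd : q * e₃ ^ 3 * e₆ ^ 3 / (e₁ * e₂) * (1 + 9 * V1 q) =
      e₂ ^ 7 * e₃ ^ 7 / (e₁ ^ 5 * e₆ ^ 5) * V1 q := by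
    rw [h9, hV]
    field_simp
  have h9_ne : 1 + 9 * V1 q ≠ 0 := by
    rw [h9]
    positivity
  refine mul_right_cancel₀ h9_ne ?_
  linear_combination (1 + 9 * V1 q) * (hσ1 + hσ2) - hfst - hsnd

lemma hasDerivAt_V1 (h0 : 0 < q) (h1 : q < 1) : HasDerivAt V1 (U1 q) q := by
  have hq : ‖q‖ < 1 := by rwa [Real.norm_of_nonneg h0.le]
  have e1 := eulerProd_pos hq
  have e3 := eulerProd_pow_pos hq three_ne_zero
  have e6 := eulerProd_pow_pos hq (n := 6) (by norm_num)
  refine (hasDerivAt_V1_sigmaSeries hq h0.ne').congr_deriv ?_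
  rw [← eulerProd_quotient_eq_sigmaSeries h0 h1, V1_eq_eulerProd hq, U1_eq_eulerProd hq]
  field_simp

lemma continuousAt_V1 (hq : ‖q‖ < 1) : ContinuousAt V1 q := by
  refine ContinuousAt.congr ?_ (V1_eventuallyEq_eulerProd hq).symm
  have h1 := eulerProd_ne_zero hq
  have h3 := eulerProd_pow_ne_zero hq three_ne_zero
  exact continuousAt_id.mul (((continuousAt_eulerProd_pow hq two_ne_zero).mul
    ((continuousAt_eulerProd_pow hq (by norm_num)).pow 5)).div
      (((hasDerivAt_eulerProd hq).continuousAt.pow 5).mul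
        (continuousAt_eulerProd_pow hq three_ne_zero)) (mul_ne_zero (pow_ne_zero 5 h1) h3))

lemma continuousAt_U1 (hq : ‖q‖ < 1) : ContinuousAt U1 q := by
  have hev : U1 =ᶠ[𝓝 q] fun x ↦ eulerProd (x ^ 2) ^ 8 * eulerProd (x ^ 3) ^ 6 /
      eulerProd x ^ 10 := by
    filter_upwards [eventually_norm_lt_one hq] with x hx using U1_eq_eulerProd hx
  refine ContinuousAt.congr ?_ hev.symm
  exact (((continuousAt_eulerProd_pow hq two_ne_zero).pow 8).mul
    ((continuousAt_eulerProd_pow hq three_ne_zero).pow 6)).div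
      ((hasDerivAt_eulerProd hq).continuousAt.pow 10) (pow_ne_zero 10 (eulerProd_ne_zero hq))

theorem integral_U1 (h0 : 0 < q) (h1 : q < 1) : ∫ t in (0 : ℝ)..q, U1 t = V1 q := by
  have hnorm : ∀ x ∈ Set.Icc 0 q, ‖x‖ < 1 := fun x hx ↦ by
    rw [Real.norm_of_nonneg hx.1]
    exact hx.2.trans_lt h1
  have hftc := intervalIntegral.integral_eq_sub_of_hasDerivAt_of_le h0.le
    (fun x hx ↦ (continuousAt_V1 (hnorm x hx)).continuousWithinAt)
    (fun x hx ↦ hasDerivAt_V1 hx.1 (hx.2.trans h1))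
    (ContinuousOn.intervalIntegrable_of_Icc h0.le
      fun x hx ↦ (continuousAt_U1 (hnorm x hx)).continuousWithinAt)
  rw [hftc, show V1 0 = 0 from zero_mul _, sub_zero]

end Derivative

/-! ### Special values -/

section SpecialValues

variable {q : ℝ}

lemma V1_pos (h0 : 0 < q) (h1 : q < 1) : 0 < V1 q := by
  have hq : ‖q‖ < 1 := by rwa [Real.norm_of_nonneg h0.le]
  have e1 := eulerProd_pos hq
  have e2 := eulerProd_pow_pos hq two_ne_zero
  have e3 := eulerProd_pow_pos hq three_ne_zero
  have e6 := eulerProd_pow_pos hq (n := 6) (by norm_num)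
  rw [V1_eq_eulerProd hq]
  positivity

lemma nome_lt_one {t : ℝ} (ht : 0 < t) : nome t < 1 :=
  (le_abs_self _).trans_lt (norm_nome_lt_one ht)

lemma exp_neg_two_pi_div (t : ℝ) : exp (-2 * π / t) = nome (1 / t) := by
  rw [nome, mul_one_div]

-- `t = 1 / √6` is the fixed point of `t ↦ 1 / (6 * t)`.
theorem V1_exp_neg_two_pi_div_sqrt_six : V1 (exp (-2 * π / √6)) = √2 / 12 := by
  have ht : 0 < 1 / √6 := by positivity
  have hfix : 1 / (6 * (1 / √6)) = 1 / √6 := by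
    field_simp
    norm_num
  have hfricke := V1_nome_mul_V1_nome_fricke ht
  have hpos := V1_pos (nome_pos _) (nome_lt_one ht)
  rw [hfix] at hfricke
  rw [exp_neg_two_pi_div, ← sq_eq_sq₀ hpos.le (by positivity), div_pow,
    Real.sq_sqrt zero_le_two, sq, hfricke]
  norm_num

lemma eulerProd_neg (hq : ‖q‖ < 1) :
    eulerProd (-q) = eulerProd (q ^ 2) ^ 3 / (eulerProd q * eulerProd (q ^ 4)) := by
  have e1 := eulerProd_ne_zero hq
  have e4 := eulerProd_pow_ne_zero hq four_ne_zero
  rw [← eulerProd_neg_mul hq]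
  field_simp

lemma eulerProd_neg_cube (hq : ‖q‖ < 1) : eulerProd ((-q) ^ 3) =
    eulerProd (q ^ 6) ^ 3 / (eulerProd (q ^ 3) * eulerProd (q ^ 12)) := by
  have h := eulerProd_neg (norm_pow_lt_one_of_ne_zero hq three_ne_zero)
  rwa [← pow_mul, ← pow_mul, ← Odd.neg_pow (by decide)] at h

lemma thetaRatio_mul_thetaRatio_neg (hq : ‖q‖ < 1) :
    thetaRatio q * thetaRatio (-q) = thetaRatio (q ^ 2) ^ 2 := by
  have e1 := eulerProd_pos hq
  have e2 := eulerProd_pow_pos hq two_ne_zero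
  have e3 := eulerProd_pow_pos hq three_ne_zero
  have e4 := eulerProd_pow_pos hq four_ne_zero
  have e6 := eulerProd_pow_pos hq (n := 6) (by norm_num)
  have e12 := eulerProd_pow_pos hq (n := 12) (by norm_num)
  simp only [thetaRatio, eulerProd_neg_cube hq, eulerProd_neg hq,
    Even.neg_pow (show Even 2 by decide), Even.neg_pow (show Even 6 by decide), ← pow_mul,
    Nat.reduceMul]
  field_simp

lemma V1_mul_V1_neg (hq : ‖q‖ < 1) :
    V1 q * V1 (-q) = -(V1 (q ^ 2) * thetaRatio (q ^ 2) ^ 4) := by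
  have e1 := eulerProd_pos hq
  have e2 := eulerProd_pow_pos hq two_ne_zero
  have e3 := eulerProd_pow_pos hq three_ne_zero
  have e4 := eulerProd_pow_pos hq four_ne_zero
  have e6 := eulerProd_pow_pos hq (n := 6) (by norm_num)
  have e12 := eulerProd_pow_pos hq (n := 12) (by norm_num)
  rw [V1_eq_eulerProd hq, V1_eq_eulerProd (by rwa [norm_neg]),
    V1_eq_eulerProd (norm_pow_lt_one_of_ne_zero hq two_ne_zero)]
  simp only [thetaRatio, eulerProd_neg_cube hq, eulerProd_neg hq,
    Even.neg_pow (show Even 2 by decide), Even.neg_pow (show Even 6 by decide), ← pow_mul,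
    Nat.reduceMul]
  field_simp

lemma sq_eq_four_thirds_of_quartic {d : ℝ} (hd : 0 < d)
    (h : 9 * (d ^ 2 + 2 * d) * d ^ 2 = 8 * (3 * d + 2)) : d ^ 2 = 4 / 3 := by
  have hfactor : (3 * d ^ 2 - 4) * (3 * d ^ 2 + 6 * d + 4) = 0 := by linear_combination h
  have hpos : 3 * d ^ 2 + 6 * d + 4 ≠ 0 := by positivity
  linear_combination (mul_eq_zero_iff_right hpos).1 hfactor / 3

lemma mul_sub_one_eq_of_three_mul_sub_one_eq_add {s t : ℝ} (hs : 1 < s)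
    (hadd : 3 * (s * t) - 1 = s + t) (hmul : (s ^ 2 - 1) * (s * t - 1) = 8 / 9) :
    s * t - 1 = (√3 - 1) / 3 := by
  obtain ⟨d, rfl⟩ : ∃ d, s = 1 + d := ⟨s - 1, by ring⟩
  have hd : 0 < d := by linarith
  have hst : ((1 + d) * t - 1) * (3 * d + 2) = d ^ 2 := by linear_combination (1 + d) * hadd
  have hd_sq : d ^ 2 = 4 / 3 := sq_eq_four_thirds_of_quartic hd (by
    linear_combination 9 * (3 * d + 2) * hmul - 9 * (d ^ 2 + 2 * d) * hst)
  have hsqrt : √3 ^ 2 = 3 := Real.sq_sqrt (by norm_num)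
  have hd_eq : d = 2 / 3 * √3 := by
    rw [← sq_eq_sq₀ hd.le (by positivity), mul_pow, hsqrt, hd_sq]
    norm_num
  refine mul_right_cancel₀ (show 3 * d + 2 ≠ 0 by positivity) ?_
  rw [hst, hd_sq, hd_eq]
  linear_combination -(2 / 3) * hsqrt

lemma V1_sq_eq_of_mul_eq (h0 : 0 < q) (h1 : q < 1) (h : V1 q * V1 (q ^ 2) = 1 / 72) :
    V1 (q ^ 2) = (√3 - 1) / 24 := by
  have hq : ‖q‖ < 1 := by rwa [Real.norm_of_nonneg h0.le]
  have hV := one_add_eight_mul_V1 hq h0.ne'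
  have hV_neg := one_add_eight_mul_V1 (q := -q) (by rwa [norm_neg]) (neg_ne_zero.2 h0.ne')
  have hV_sq := one_add_eight_mul_V1 (norm_pow_lt_one_of_ne_zero hq two_ne_zero)
    (pow_ne_zero 2 h0.ne')
  have hV_pos := V1_pos h0 h1
  have hV_sq_pos := V1_pos (pow_pos h0 2) (pow_lt_one₀ h0.le h1 two_ne_zero)
  have hVV := V1_mul_V1_neg hq
  rw [← hV_sq] at hVV
  obtain ⟨s, hs⟩ : ∃ s, s = thetaRatio q ^ 2 := ⟨_, rfl⟩
  obtain ⟨t, ht⟩ : ∃ t, t = thetaRatio (-q) ^ 2 := ⟨_, rfl⟩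
  have hs_sq : s ^ 2 = 1 + 8 * V1 q := by rw [hV, hs, ← pow_mul]
  have ht_sq : t ^ 2 = 1 + 8 * V1 (-q) := by rw [hV_neg, ht, ← pow_mul]
  have hst : s * t = 1 + 8 * V1 (q ^ 2) := by
    rw [hV_sq, hs, ht, ← mul_pow, thetaRatio_mul_thetaRatio_neg hq, ← pow_mul]
  have ht_nonneg : 0 ≤ t := ht ▸ sq_nonneg _
  have hs_one : 1 < s := by
    rw [← one_lt_sq_iff₀ (hs ▸ sq_nonneg _), hs_sq]
    linarith
  have hmul : (s ^ 2 - 1) * (t ^ 2 - 1) = -8 * (s * t) * (s * t - 1) := by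
    rw [hs_sq, ht_sq, hst]
    linear_combination 64 * hVV
  have hadd : 3 * (s * t) - 1 = s + t := by
    rw [← sq_eq_sq₀ (by linarith) (by linarith)]
    linear_combination hmul
  have hval := mul_sub_one_eq_of_three_mul_sub_one_eq_add hs_one hadd (by
    rw [hs_sq, hst]
    linear_combination 64 * h)
  linear_combination (hval - hst) / 8

-- For `t = 1 / (2 * √3)` the map `t ↦ 1 / (6 * t)` sends `nome t` to its square.
theorem V1_exp_neg_two_pi_div_sqrt_three : V1 (exp (-2 * π / √3)) = (√3 - 1) / 24 := by
  have ht : 0 < 1 / (2 * √3) := by positivity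
  have hsq : nome (1 / √3) = nome (1 / (2 * √3)) ^ 2 := by
    rw [nome_pow]
    congr 1
    field_simp
    norm_num
  have hinv : 1 / (6 * (1 / (2 * √3))) = 1 / √3 := by
    field_simp
    norm_num
  have hfricke := V1_nome_mul_V1_nome_fricke ht
  rw [hinv, hsq] at hfricke
  rw [exp_neg_two_pi_div, hsq]
  exact V1_sq_eq_of_mul_eq (nome_pos _) (nome_lt_one ht) hfricke

/-- A Hauptmodul of level 18, in terms of which both `V1 q` and `V1 (q ^ 3)` are rational. -/
noncomputable def cubicParam (q : ℝ) : ℝ :=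
  q * eulerProd (q ^ 3) * eulerProd (q ^ 18) ^ 3 / (eulerProd (q ^ 6) * eulerProd (q ^ 9) ^ 3)

lemma cubicParam_pos (h0 : 0 < q) (h1 : q < 1) : 0 < cubicParam q := by
  have hq : ‖q‖ < 1 := by rwa [Real.norm_of_nonneg h0.le]
  have e3 := eulerProd_pow_pos hq three_ne_zero
  have e6 := eulerProd_pow_pos hq (n := 6) (by norm_num)
  have e9 := eulerProd_pow_pos hq (n := 9) (by norm_num)
  have e18 := eulerProd_pow_pos hq (n := 18) (by norm_num)
  rw [cubicParam]
  positivity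

lemma thetaRatio_mul_thetaRatio_cube (hq : ‖q‖ < 1) (h0 : q ≠ 0) :
    thetaRatio q * thetaRatio (q ^ 3) * (1 - 2 * cubicParam q) = 1 := by
  have hdissect := thetaProd_sq_self_three_dissection hq h0
  have hθ9 := thetaProd_sq_self (norm_pow_lt_one_of_ne_zero hq (n := 9) (by norm_num))
    (pow_ne_zero 9 h0)
  have hθ3 := thetaProd_pow_six_self (norm_pow_lt_one_of_ne_zero hq three_ne_zero)
    (pow_ne_zero 3 h0)
  simp only [← pow_mul, Nat.reduceMul] at hθ9 hθ3
  rw [thetaProd_sq_self hq h0, hθ9, hθ3] at hdissect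
  have e1 := eulerProd_pos hq
  have e2 := eulerProd_pow_pos hq two_ne_zero
  have e3 := eulerProd_pow_pos hq three_ne_zero
  have e6 := eulerProd_pow_pos hq (n := 6) (by norm_num)
  have e9 := eulerProd_pow_pos hq (n := 9) (by norm_num)
  have e18 := eulerProd_pow_pos hq (n := 18) (by norm_num)
  have hparam : 1 - 2 * cubicParam q =
      eulerProd q ^ 2 / eulerProd (q ^ 2) * (eulerProd (q ^ 18) / eulerProd (q ^ 9) ^ 2) := by
    rw [hdissect, cubicParam]
    field_simp
  rw [hparam]
  simp only [thetaRatio, ← pow_mul, Nat.reduceMul]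
  field_simp

lemma V1_cube_eq_cubicParam_cube_mul (hq : ‖q‖ < 1) :
    V1 (q ^ 3) = cubicParam q ^ 3 * thetaRatio (q ^ 3) ^ 4 := by
  have e3 := eulerProd_pow_pos hq three_ne_zero
  have e6 := eulerProd_pow_pos hq (n := 6) (by norm_num)
  have e9 := eulerProd_pow_pos hq (n := 9) (by norm_num)
  have e18 := eulerProd_pow_pos hq (n := 18) (by norm_num)
  rw [V1_eq_eulerProd (norm_pow_lt_one_of_ne_zero hq three_ne_zero)]
  simp only [cubicParam, thetaRatio, ← pow_mul, Nat.reduceMul]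
  field_simp

lemma one_sub_two_mul_cubicParam_pos (hq : ‖q‖ < 1) (h0 : q ≠ 0) :
    0 < 1 - 2 * cubicParam q :=
  pos_of_mul_pos_right ((thetaRatio_mul_thetaRatio_cube hq h0).symm ▸ one_pos)
    (mul_pos (thetaRatio_pos hq)
      (thetaRatio_pos (norm_pow_lt_one_of_ne_zero hq three_ne_zero))).le

lemma V1_cube_mul_one_sub_cubicParam (hq : ‖q‖ < 1) (h0 : q ≠ 0) :
    V1 (q ^ 3) * (1 - 8 * cubicParam q ^ 3) = cubicParam q ^ 3 := by
  have h8 := one_add_eight_mul_V1 (norm_pow_lt_one_of_ne_zero hq three_ne_zero)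
    (pow_ne_zero 3 h0)
  linear_combination V1_cube_eq_cubicParam_cube_mul hq - cubicParam q ^ 3 * h8

lemma V1_mul_one_sub_cubicParam_cube (hq : ‖q‖ < 1) (h0 : q ≠ 0) :
    V1 q * (1 - 2 * cubicParam q) ^ 3 =
      cubicParam q * (1 - cubicParam q + cubicParam q ^ 2) := by
  have hV := one_add_eight_mul_V1 hq h0
  have hV3 := one_add_eight_mul_V1 (norm_pow_lt_one_of_ne_zero hq three_ne_zero)
    (pow_ne_zero 3 h0)
  have hw := V1_cube_mul_one_sub_cubicParam hq h0
  have hprod : (1 + 8 * V1 q) * (1 + 8 * V1 (q ^ 3)) * (1 - 2 * cubicParam q) ^ 4 = 1 := by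
    rw [hV, hV3, ← mul_pow, ← mul_pow, thetaRatio_mul_thetaRatio_cube hq h0, one_pow]
  refine mul_right_cancel₀ (one_sub_two_mul_cubicParam_pos hq h0).ne' ?_
  linear_combination (1 - 8 * cubicParam q ^ 3) / 8 * hprod -
    (1 + 8 * V1 q) * (1 - 2 * cubicParam q) ^ 4 * hw

lemma one_sub_two_mul_eq_sqrt_six_mul {w : ℝ} (hw : 0 < w) (hw' : 0 < 1 - 2 * w)
    (h : 72 * w ^ 4 * (1 - w + w ^ 2) = (1 - 2 * w) ^ 3 * (1 - 8 * w ^ 3)) :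
    1 - 2 * w = √6 * w := by
  obtain ⟨a, ha⟩ : ∃ a, a = 1 - 2 * w := ⟨_, rfl⟩
  rw [← ha] at hw' ⊢
  have hfactor :
      (a ^ 2 - 6 * w ^ 2) * (a ^ 4 + 6 * a ^ 3 * w + 18 * a ^ 2 * w ^ 2 + 36 * a * w ^ 3 +
        36 * w ^ 4) = 0 := by
    subst ha
    linear_combination -h
  have hpos : a ^ 4 + 6 * a ^ 3 * w + 18 * a ^ 2 * w ^ 2 + 36 * a * w ^ 3 + 36 * w ^ 4 ≠ 0 := by
    positivity
  rw [← sq_eq_sq₀ hw'.le (by positivity), mul_pow, Real.sq_sqrt (by norm_num)]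
  linear_combination (mul_eq_zero_iff_right hpos).1 hfactor

lemma V1_cube_eq_of_mul_eq (h0 : 0 < q) (h1 : q < 1) (h : V1 q * V1 (q ^ 3) = 1 / 72) :
    V1 (q ^ 3) = (√6 - 2) / 36 := by
  have hq : ‖q‖ < 1 := by rwa [Real.norm_of_nonneg h0.le]
  have hV := V1_mul_one_sub_cubicParam_cube hq h0.ne'
  have hV3 := V1_cube_mul_one_sub_cubicParam hq h0.ne'
  have hw := cubicParam_pos h0 h1
  have hw' := one_sub_two_mul_cubicParam_pos hq h0.ne'
  generalize cubicParam q = w at *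
  have hlin : 1 - 2 * w = √6 * w := one_sub_two_mul_eq_sqrt_six_mul hw hw' (by
    linear_combination 72 * (1 - 2 * w) ^ 3 * (1 - 8 * w ^ 3) * h - 72 * w ^ 3 * hV -
      72 * V1 q * (1 - 2 * w) ^ 3 * hV3)
  have hsqrt : √6 ^ 2 = 6 := Real.sq_sqrt (by norm_num)
  have hcube : 1 - 8 * w ^ 3 = (18 * √6 + 36) * w ^ 3 := by
    have hone : 1 = (√6 + 2) * w := by linear_combination hlin
    calc 1 - 8 * w ^ 3 = ((√6 + 2) ^ 3 - 8) * w ^ 3 := by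
          rw [sub_mul, ← mul_pow, ← hone, one_pow]
      _ = (18 * √6 + 36) * w ^ 3 := by linear_combination (√6 + 6) * w ^ 3 * hsqrt
  have hval : V1 (q ^ 3) * (18 * √6 + 36) = 1 := by
    refine mul_right_cancel₀ (pow_ne_zero 3 hw.ne') ?_
    rw [mul_assoc, ← hcube, hV3, one_mul]
  refine mul_right_cancel₀ (show 18 * √6 + 36 ≠ 0 by positivity) ?_
  linear_combination hval - hsqrt / 2

-- For `t = 1 / (3 * √2)` the map `t ↦ 1 / (6 * t)` sends `nome t` to its cube.
theorem V1_exp_neg_two_pi_div_sqrt_two : V1 (exp (-2 * π / √2)) = (√6 - 2) / 36 := by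
  have ht : 0 < 1 / (3 * √2) := by positivity
  have hcube : nome (1 / √2) = nome (1 / (3 * √2)) ^ 3 := by
    rw [nome_pow]
    congr 1
    field_simp
    norm_num
  have hinv : 1 / (6 * (1 / (3 * √2))) = 1 / √2 := by
    field_simp
    norm_num
  have hfricke := V1_nome_mul_V1_nome_fricke ht
  rw [hinv, hcube] at hfricke
  rw [exp_neg_two_pi_div, hcube]
  exact V1_cube_eq_of_mul_eq (nome_pos _) (nome_lt_one ht) hfricke

end SpecialValues

theorem stmt_1 :
    (∀ q : ℝ, 0 < q → q < 1 → (∫ t in (0:ℝ)..q, U1 t) = V1 q) ∧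
    V1 (Real.exp (-2 * Real.pi / Real.sqrt 6)) = Real.sqrt 2 / 12 ∧
    V1 (Real.exp (-2 * Real.pi / Real.sqrt 3)) = (Real.sqrt 3 - 1) / 24 ∧
    V1 (Real.exp (-2 * Real.pi / Real.sqrt 2)) = (Real.sqrt 6 - 2) / 36 :=
  ⟨fun _ h0 h1 ↦ integral_U1 h0 h1, V1_exp_neg_two_pi_div_sqrt_six,
    V1_exp_neg_two_pi_div_sqrt_three, V1_exp_neg_two_pi_div_sqrt_two⟩
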